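/- arXiv:1312.1939 — 5 statements merged into one kernel-verified Lean document; each statement's English description precedes it below -/
import Mathlib

section
/- Let λ > 0, ε > 0, z ∈ ℝ, and r ∈ (0, ∞]. Then P(there exists t ∈ [0, r) with ε·B((1 − e^{−2λt})/(2λ)) = z) = 2·(1 − Φ(|z|·√(2λ)/(ε·√(1 − e^{−2λr})))), where for r = ∞ one reads e^{−2λr} = 0. -/
open MeasureTheory ProbabilityTheory Filter Topology Set
open scoped ENNReal

/-- `B` is a standard Brownian motion (for times `t ≥ 0`) on the probability space `(Ω, P)`. -/
def IsBrownianMotion {Ω : Type*} [MeasurableSpace Ω] (P : Measure Ω) (B : ℝ → Ω → ℝ) : Prop :=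
  (∀ t : ℝ, Measurable (B t)) ∧
  (∀ᵐ ω ∂P, B 0 ω = 0 ∧ ContinuousOn (fun t => B t ω) (Set.Ici (0 : ℝ))) ∧
  (∀ s t : ℝ, 0 ≤ s → s ≤ t →
    Measure.map (fun ω => B t ω - B s ω) P = gaussianReal 0 (Real.toNNReal (t - s))) ∧
  (∀ t : ℕ → ℝ, Monotone t → (∀ i, 0 ≤ t i) →
    iIndepFun (fun i ω => B (t (i + 1)) ω - B (t i) ω) P)

/-- The standard Gaussian distribution function `Φ`. -/
noncomputable def gaussPhi (x : ℝ) : ℝ :=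
  ∫ y in Set.Iic x, (1 / Real.sqrt (2 * Real.pi)) * Real.exp (-(y ^ 2) / 2)

section RandomWalk

/-- The partial sum of the first `n` terms of a sequence of steps. -/
def walk (n : ℕ) (x : ℕ → ℝ) : ℝ := ∑ i ∈ Finset.range n, x i

/-- Change the sign of all steps from index `k` on. -/
def flipFrom (k : ℕ) (x : ℕ → ℝ) : ℕ → ℝ := fun i => if i < k then x i else -x i

/-- The walk enters `[a, ∞)` for the first time at time `k`. -/
def firstPassage (a : ℝ) (k : ℕ) : Set (ℕ → ℝ) :=
  {x | a ≤ walk k x ∧ ∀ j < k, walk j x < a}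

@[fun_prop]
lemma measurable_walk (n : ℕ) : Measurable (walk n) := by
  unfold walk
  fun_prop

lemma measurableSet_walk_ge (n : ℕ) (c : ℝ) : MeasurableSet {x | c ≤ walk n x} :=
  measurableSet_le measurable_const (measurable_walk n)

lemma measurableSet_firstPassage (a : ℝ) (k : ℕ) : MeasurableSet (firstPassage a k) := by
  have h : firstPassage a k
      = {x | a ≤ walk k x} ∩ ⋂ j, ⋂ _ : j < k, {x | walk j x < a} := by
    ext x
    simp [firstPassage]
  rw [h]
  exact (measurableSet_walk_ge k a).inter (MeasurableSet.iInter fun j => MeasurableSet.iInter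
    fun _ => measurableSet_lt (measurable_walk j) measurable_const)

lemma measurableSet_exists_step_ge (δ : ℝ) (n : ℕ) :
    MeasurableSet {x : ℕ → ℝ | ∃ i < n, δ ≤ x i} := by
  have : {x : ℕ → ℝ | ∃ i < n, δ ≤ x i} = ⋃ i, ⋃ _ : i < n, {x | δ ≤ x i} := by
    ext x
    simp
  rw [this]
  exact MeasurableSet.iUnion fun i => MeasurableSet.iUnion fun _ =>
    measurableSet_le measurable_const (measurable_pi_apply i)

lemma pairwise_disjoint_firstPassage (a : ℝ) :
    Pairwise (Function.onFun Disjoint (firstPassage a)) := by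
  intro j k hjk
  refine Set.disjoint_left.2 fun x hj hk => ?_
  rcases lt_or_gt_of_ne hjk with h | h
  · exact absurd hj.1 (not_le.2 (hk.2 j h))
  · exact absurd hk.1 (not_le.2 (hj.2 k h))

lemma exists_walk_ge_eq_biUnion (a : ℝ) (n : ℕ) :
    {x | ∃ k ≤ n, a ≤ walk k x} = ⋃ k ∈ Finset.range (n + 1), firstPassage a k := by
  classical
  ext x
  simp only [mem_ofPred_eq, mem_iUnion, Finset.mem_range, Nat.lt_succ_iff, exists_prop]
  constructor
  · rintro ⟨k, hkn, hk⟩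
    have hex : ∃ k, a ≤ walk k x := ⟨k, hk⟩
    exact ⟨Nat.find hex, (Nat.find_min' hex hk).trans hkn, Nat.find_spec hex,
      fun j hj => not_le.1 (Nat.find_min hex hj)⟩
  · rintro ⟨k, hkn, hk⟩
    exact ⟨k, hkn, hk.1⟩

lemma measure_exists_walk_ge_inter (ν : Measure (ℕ → ℝ)) (a : ℝ) (n : ℕ) {E : Set (ℕ → ℝ)}
    (hE : MeasurableSet E) :
    ν ({x | ∃ k ≤ n, a ≤ walk k x} ∩ E)
      = ∑ k ∈ Finset.range (n + 1), ν (firstPassage a k ∩ E) := by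
  rw [exists_walk_ge_eq_biUnion, Set.iUnion₂_inter]
  refine measure_biUnion_finset (fun j _ k _ hjk => ?_)
    fun k _ => (measurableSet_firstPassage a k).inter hE
  exact (pairwise_disjoint_firstPassage a hjk).mono Set.inter_subset_left Set.inter_subset_left

lemma walk_flipFrom_of_le {k j : ℕ} (h : j ≤ k) (x : ℕ → ℝ) :
    walk j (flipFrom k x) = walk j x := by
  refine Finset.sum_congr rfl fun i hi => ?_
  simp [flipFrom, (Finset.mem_range.1 hi).trans_le h]

lemma walk_flipFrom_of_ge {k n : ℕ} (h : k ≤ n) (x : ℕ → ℝ) :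
    walk n (flipFrom k x) = 2 * walk k x - walk n x := by
  have h1 := walk_flipFrom_of_le le_rfl x (k := k)
  have h2 : ∑ i ∈ Finset.Ico k n, flipFrom k x i = -∑ i ∈ Finset.Ico k n, x i := by
    rw [← Finset.sum_neg_distrib]
    refine Finset.sum_congr rfl fun i hi => ?_
    simp [flipFrom, (Finset.mem_Ico.1 hi).1]
  simp only [walk] at *
  rw [← Finset.sum_range_add_sum_Ico _ h, ← Finset.sum_range_add_sum_Ico x h, h1, h2]
  ring

lemma flipFrom_preimage_firstPassage (a : ℝ) (k : ℕ) :
    flipFrom k ⁻¹' firstPassage a k = firstPassage a k := by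
  ext x
  simp only [firstPassage, mem_preimage, mem_ofPred_eq, walk_flipFrom_of_le le_rfl]
  refine and_congr_right fun _ => forall₂_congr fun j hj => ?_
  rw [walk_flipFrom_of_le hj.le]

variable {μ : ℕ → Measure ℝ} [∀ i, IsProbabilityMeasure (μ i)]

lemma measurePreserving_flipFrom (hμ : ∀ i, (μ i).map (fun y => -y) = μ i) (k : ℕ) :
    MeasurePreserving (flipFrom k) (Measure.infinitePi μ) (Measure.infinitePi μ) := by
  have hm : ∀ i, Measurable (fun y : ℝ => if i < k then y else -y) := fun i => by
    split_ifs <;> fun_prop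
  refine ⟨measurable_pi_iff.2 fun i => (hm i).comp (measurable_pi_apply i), ?_⟩
  have h := Measure.infinitePi_map_pi (μ := μ) (f := fun i y => if i < k then y else -y) hm
  refine h.trans ?_
  congr 1
  funext i
  by_cases hi : i < k
  · simp [hi]
  · simp [hi, hμ i]

/-- Reflecting the walk after its first passage does not change the law of its endpoint. -/
lemma measure_firstPassage_reflect (hμ : ∀ i, (μ i).map (fun y => -y) = μ i) (a c : ℝ) {k n : ℕ}
    (h : k ≤ n) :
    Measure.infinitePi μ (firstPassage a k ∩ {x | c ≤ 2 * walk k x - walk n x})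
      = Measure.infinitePi μ (firstPassage a k ∩ {x | c ≤ walk n x}) := by
  rw [← (measurePreserving_flipFrom hμ k).measure_preimage
    ((measurableSet_firstPassage a k).inter (measurableSet_walk_ge n c)).nullMeasurableSet,
    preimage_inter, flipFrom_preimage_firstPassage]
  simp only [preimage_ofPred_eq, walk_flipFrom_of_ge h]

/-- **Lévy's maximal inequality** for a walk with independent symmetric steps. -/
theorem measure_exists_walk_ge_le (hμ : ∀ i, (μ i).map (fun y => -y) = μ i) (a : ℝ) (n : ℕ) :
    Measure.infinitePi μ {x | ∃ k ≤ n, a ≤ walk k x}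
      ≤ 2 * Measure.infinitePi μ {x | a ≤ walk n x} := by
  set ν := Measure.infinitePi μ
  have h1 := measure_exists_walk_ge_inter ν a n MeasurableSet.univ
  have h2 := measure_exists_walk_ge_inter ν a n (measurableSet_walk_ge n a)
  simp only [inter_univ] at h1
  calc ν {x | ∃ k ≤ n, a ≤ walk k x}
      = ∑ k ∈ Finset.range (n + 1), ν (firstPassage a k) := h1
    _ ≤ ∑ k ∈ Finset.range (n + 1), 2 * ν (firstPassage a k ∩ {x | a ≤ walk n x}) := by
        refine Finset.sum_le_sum fun k hk => ?_
        have hkn : k ≤ n := Nat.lt_succ_iff.1 (Finset.mem_range.1 hk)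
        rw [two_mul]
        nth_rewrite 2 [← measure_firstPassage_reflect hμ a a hkn]
        refine (measure_mono fun x hx => ?_).trans (measure_union_le _ _)
        rcases le_or_gt a (walk n x) with h | h
        · exact Or.inl ⟨hx, h⟩
        · refine Or.inr ⟨hx, ?_⟩
          have := hx.1
          simp only [mem_ofPred_eq]
          linarith
    _ = 2 * ν ({x | ∃ k ≤ n, a ≤ walk k x} ∩ {x | a ≤ walk n x}) := by
        rw [h2, Finset.mul_sum]
    _ ≤ 2 * ν {x | a ≤ walk n x} := by gcongr; exact inter_subset_right

lemma exists_step_ge_of_firstPassage {a δ : ℝ} (ha : 0 ≤ a) (hδ : 0 < δ) {k n : ℕ} (h : k ≤ n)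
    {x : ℕ → ℝ} (hx : x ∈ firstPassage a k) (hk : a + δ ≤ walk k x) : ∃ i < n, δ ≤ x i := by
  cases k with
  | zero =>
    simp only [walk, Finset.range_zero, Finset.sum_empty] at hk
    linarith
  | succ k =>
    refine ⟨k, h, ?_⟩
    have h1 := hx.2 k (Nat.lt_succ_self k)
    simp only [walk, Finset.sum_range_succ] at h1 hk
    linarith

/-- A converse to Lévy's maximal inequality, up to the event that some step is large. -/
theorem two_mul_measure_walk_ge_le (hμ : ∀ i, (μ i).map (fun y => -y) = μ i) {a δ : ℝ}
    (ha : 0 ≤ a) (hδ : 0 < δ) (n : ℕ) :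
    2 * Measure.infinitePi μ {x | a + δ ≤ walk n x}
      ≤ Measure.infinitePi μ {x | ∃ k ≤ n, a ≤ walk k x}
        + Measure.infinitePi μ {x | ∃ i < n, δ ≤ x i} := by
  set ν := Measure.infinitePi μ
  set D : Set (ℕ → ℝ) := {x | ∃ i < n, δ ≤ x i}
  have hD : MeasurableSet D := measurableSet_exists_step_ge δ n
  have h1 := measure_exists_walk_ge_inter ν a n MeasurableSet.univ
  have h2 := measure_exists_walk_ge_inter ν a n (measurableSet_walk_ge n (a + δ))
  have h3 := measure_exists_walk_ge_inter ν a n hD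
  simp only [inter_univ] at h1
  calc 2 * ν {x | a + δ ≤ walk n x}
      ≤ 2 * ν ({x | ∃ k ≤ n, a ≤ walk k x} ∩ {x | a + δ ≤ walk n x}) := by
        gcongr
        intro x hx
        simp only [mem_ofPred_eq] at hx
        exact ⟨⟨n, le_rfl, by linarith⟩, hx⟩
    _ = ∑ k ∈ Finset.range (n + 1), 2 * ν (firstPassage a k ∩ {x | a + δ ≤ walk n x}) := by
        rw [h2, Finset.mul_sum]
    _ ≤ ∑ k ∈ Finset.range (n + 1), (ν (firstPassage a k) + ν (firstPassage a k ∩ D)) := by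
        refine Finset.sum_le_sum fun k hk => ?_
        have hkn : k ≤ n := Nat.lt_succ_iff.1 (Finset.mem_range.1 hk)
        rw [two_mul]
        nth_rewrite 1 [← measure_firstPassage_reflect hμ a (a + δ) hkn]
        rw [← measure_union_add_inter _
          ((measurableSet_firstPassage a k).inter (measurableSet_walk_ge n (a + δ)))]
        refine add_le_add (measure_mono (union_subset inter_subset_left inter_subset_left))
          (measure_mono ?_)
        rintro x ⟨⟨hx, hx1⟩, -, hx2⟩
        simp only [mem_ofPred_eq] at hx1 hx2
        exact ⟨hx, exists_step_ge_of_firstPassage ha hδ hkn hx (by linarith)⟩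
    _ = ν {x | ∃ k ≤ n, a ≤ walk k x} + ν ({x | ∃ k ≤ n, a ≤ walk k x} ∩ D) := by
        rw [Finset.sum_add_distrib, ← h1, ← h3]
    _ ≤ ν {x | ∃ k ≤ n, a ≤ walk k x} + ν D := by gcongr; exact inter_subset_right

end RandomWalk

section GaussianTail

lemma gaussPhi_eq_integral_gaussianPDFReal (x : ℝ) :
    gaussPhi x = ∫ y in Iic x, gaussianPDFReal 0 1 y := by
  simp [gaussPhi, gaussianPDFReal]

lemma continuous_gaussPhi : Continuous gaussPhi := by
  have hint := integrable_gaussianPDFReal 0 1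
  have h : gaussPhi = fun x => gaussPhi 0 + ∫ y in (0 : ℝ)..x, gaussianPDFReal 0 1 y := by
    funext x
    have := intervalIntegral.integral_Iic_sub_Iic (a := 0) (b := x) hint.integrableOn
      hint.integrableOn
    simp only [gaussPhi_eq_integral_gaussianPDFReal]
    linarith
  rw [h]
  exact continuous_const.add
    (intervalIntegral.continuous_primitive (fun _ _ => hint.intervalIntegrable) 0)

lemma gaussianReal_real_Ici (x : ℝ) : (gaussianReal 0 1).real (Ici x) = 1 - gaussPhi x := by
  have := nullSingletonClass_gaussianReal (μ := 0) (v := 1) one_ne_zero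
  have h : (gaussianReal 0 1).real (Iic x) = gaussPhi x := by
    rw [gaussPhi_eq_integral_gaussianPDFReal, measureReal_def,
      gaussianReal_apply_eq_integral 0 one_ne_zero,
      ENNReal.toReal_ofReal (integral_nonneg fun y => gaussianPDFReal_nonneg 0 1 y)]
  rw [measureReal_def, ← measure_congr (Ioi_ae_eq_Ici (μ := gaussianReal 0 1) (a := x)),
    ← measureReal_def, ← compl_Iic, probReal_compl_eq_one_sub measurableSet_Iic, h]

lemma gaussianReal_toNNReal_real_Ici {T : ℝ} (hT : 0 < T) (c : ℝ) :
    (gaussianReal 0 T.toNNReal).real (Ici c) = 1 - gaussPhi (c / √T) := by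
  have hs : 0 < √T := Real.sqrt_pos.2 hT
  have h : gaussianReal 0 T.toNNReal = (gaussianReal 0 1).map (fun y => √T * y) := by
    rw [gaussianReal_map_const_mul, mul_zero, mul_one]
    congr 1
    ext
    simp [Real.sq_sqrt hT.le, hT.le]
  rw [← gaussianReal_real_Ici, h, map_measureReal_apply (by fun_prop) measurableSet_Ici]
  congr 1
  ext y
  simp [div_le_iff₀' hs]

lemma gaussianReal_zero_map_neg (v : NNReal) :
    (gaussianReal 0 v).map (fun y => -y) = gaussianReal 0 v := by
  rw [gaussianReal_map_neg, neg_zero]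

end GaussianTail

namespace IsBrownianMotion

variable {Ω : Type*} [MeasurableSpace Ω] {P : Measure Ω} {B : ℝ → Ω → ℝ}

/-- The increments of `B` along the grid of mesh `h`. -/
def gridIncrements (B : ℝ → Ω → ℝ) (h : ℝ) (ω : Ω) (i : ℕ) : ℝ :=
  B ((i + 1 : ℕ) * h) ω - B (i * h) ω

lemma measurable_increment (hB : IsBrownianMotion P B) (s t : ℝ) :
    Measurable fun ω => B t ω - B s ω :=
  (hB.1 t).sub (hB.1 s)

protected lemma neg (hB : IsBrownianMotion P B) : IsBrownianMotion P (fun t ω => -B t ω) := by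
  have hinc := hB.measurable_increment
  obtain ⟨hm, hc, hl, hi⟩ := hB
  refine ⟨fun t => (hm t).neg, ?_, fun s t hs hst => ?_, fun t ht h0 => ?_⟩
  · filter_upwards [hc] with ω hω
    exact ⟨by simp [hω.1], hω.2.neg⟩
  · have h : (fun ω => -B t ω - -B s ω) = (fun y => -y) ∘ fun ω => B t ω - B s ω := by
      funext ω
      simp only [Function.comp_apply]
      ring
    rw [h, ← Measure.map_map (by fun_prop) (hinc s t), hl s t hs hst,
      gaussianReal_map_neg, neg_zero]
  · have h := (hi t ht h0).comp (fun _ y => -y) fun _ => measurable_neg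
    convert h using 3 with i ω
    simp only [Function.comp_apply]
    ring

lemma measurable_gridIncrements (hB : IsBrownianMotion P B) (h : ℝ) :
    Measurable (gridIncrements B h) :=
  measurable_pi_iff.2 fun _ => hB.measurable_increment _ _

lemma map_gridIncrements [IsProbabilityMeasure P] (hB : IsBrownianMotion P B) {h : ℝ}
    (hh : 0 ≤ h) :
    P.map (gridIncrements B h)
      = Measure.infinitePi fun _ : ℕ => gaussianReal 0 h.toNNReal := by
  have hmono : Monotone fun i : ℕ => (i : ℝ) * h := fun i j hij => by
    simp only
    gcongr
  have hind := hB.2.2.2 (fun i : ℕ => (i : ℝ) * h) hmono fun i => by positivity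
  have hlaw := hind.map_fun_eq_infinitePi_map fun i => hB.measurable_increment _ _
  refine hlaw.trans ?_
  congr 1
  funext i
  refine (hB.2.2.1 _ _ (by positivity) (hmono (Nat.le_succ i))).trans ?_
  congr 2
  push_cast
  ring

lemma ae_walk_gridIncrements (hB : IsBrownianMotion P B) (h : ℝ) :
    ∀ᵐ ω ∂P, ∀ k, walk k (gridIncrements B h ω) = B (k * h) ω := by
  filter_upwards [hB.2.1] with ω hω k
  simp only [walk, gridIncrements]
  rw [Finset.sum_range_sub fun i : ℕ => B (i * h) ω]
  simp [hω.1]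

lemma map_gridIncrements_apply_congr [IsProbabilityMeasure P] (hB : IsBrownianMotion P B) {h : ℝ}
    (hh : 0 ≤ h) {A : Set (ℕ → ℝ)} (hA : MeasurableSet A) {E : Set Ω}
    (hE : ∀ᵐ ω ∂P, gridIncrements B h ω ∈ A ↔ ω ∈ E) :
    Measure.infinitePi (fun _ : ℕ => gaussianReal 0 h.toNNReal) A = P E := by
  rw [← hB.map_gridIncrements hh, Measure.map_apply (hB.measurable_gridIncrements h) hA]
  exact measure_congr (hE.mono fun ω hω => propext hω)

lemma infinitePi_walk_ge [IsProbabilityMeasure P] (hB : IsBrownianMotion P B) {h : ℝ}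
    (hh : 0 ≤ h) (c : ℝ) (n : ℕ) :
    Measure.infinitePi (fun _ : ℕ => gaussianReal 0 h.toNNReal) {x | c ≤ walk n x}
      = P {ω | c ≤ B (n * h) ω} :=
  hB.map_gridIncrements_apply_congr hh (measurableSet_walk_ge n c) <| by
    filter_upwards [hB.ae_walk_gridIncrements h] with ω hω
    simp [hω]

lemma infinitePi_exists_walk_ge [IsProbabilityMeasure P] (hB : IsBrownianMotion P B) {h : ℝ}
    (hh : 0 ≤ h) (c : ℝ) (n : ℕ) :
    Measure.infinitePi (fun _ : ℕ => gaussianReal 0 h.toNNReal) {x | ∃ k ≤ n, c ≤ walk k x}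
      = P {ω | ∃ k ≤ n, c ≤ B (k * h) ω} := by
  refine hB.map_gridIncrements_apply_congr hh ?_ ?_
  · rw [exists_walk_ge_eq_biUnion]
    exact Finset.measurableSet_biUnion _ fun k _ => measurableSet_firstPassage c k
  · filter_upwards [hB.ae_walk_gridIncrements h] with ω hω
    simp [hω]

lemma measure_exists_grid_ge_le [IsProbabilityMeasure P] (hB : IsBrownianMotion P B) {h : ℝ}
    (hh : 0 ≤ h) (a : ℝ) (n : ℕ) :
    P {ω | ∃ k ≤ n, a ≤ B (k * h) ω} ≤ 2 * P {ω | a ≤ B (n * h) ω} := by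
  rw [← hB.infinitePi_exists_walk_ge hh, ← hB.infinitePi_walk_ge hh]
  exact measure_exists_walk_ge_le (fun _ => gaussianReal_zero_map_neg _) a n

lemma two_mul_measure_ge_le [IsProbabilityMeasure P] (hB : IsBrownianMotion P B) {h : ℝ}
    (hh : 0 ≤ h) {a δ : ℝ} (ha : 0 ≤ a) (hδ : 0 < δ) (n : ℕ) :
    2 * P {ω | a + δ ≤ B (n * h) ω}
      ≤ P {ω | ∃ k ≤ n, a ≤ B (k * h) ω}
        + P {ω | ∃ i < n, δ ≤ gridIncrements B h ω i} := by
  rw [← hB.infinitePi_exists_walk_ge hh, ← hB.infinitePi_walk_ge hh,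
    ← hB.map_gridIncrements_apply_congr hh (measurableSet_exists_step_ge δ n)
      (E := {ω | ∃ i < n, δ ≤ gridIncrements B h ω i}) (ae_of_all P fun ω => Iff.rfl)]
  exact two_mul_measure_walk_ge_le (fun _ => gaussianReal_zero_map_neg _) ha hδ n

lemma measureReal_ge (hB : IsBrownianMotion P B) {T : ℝ} (hT : 0 < T) (c : ℝ) :
    P.real {ω | c ≤ B T ω} = 1 - gaussPhi (c / √T) := by
  have h := hB.2.2.1 0 T le_rfl hT.le
  rw [sub_zero] at h
  rw [← gaussianReal_toNNReal_real_Ici hT, ← h,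
    map_measureReal_apply (hB.measurable_increment 0 T) measurableSet_Ici]
  refine measureReal_congr ?_
  filter_upwards [hB.2.1] with ω hω
  refine propext ?_
  change c ≤ B T ω ↔ c ≤ B T ω - B 0 ω
  rw [hω.1, sub_zero]

lemma measure_eq_zero (hB : IsBrownianMotion P B) {T : ℝ} (hT : 0 < T) (c : ℝ) :
    P {ω | B T ω = c} = 0 := by
  have h := hB.2.2.1 0 T le_rfl hT.le
  rw [sub_zero] at h
  have := nullSingletonClass_gaussianReal (μ := 0) (v := T.toNNReal) (by simpa using hT)
  have h0 : (gaussianReal 0 T.toNNReal) {c} = 0 := measure_singleton c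
  rw [← h, Measure.map_apply (hB.measurable_increment 0 T) (measurableSet_singleton c)] at h0
  rw [← h0]
  refine measure_congr ?_
  filter_upwards [hB.2.1] with ω hω
  refine propext ?_
  change B T ω = c ↔ B T ω - B 0 ω = c
  rw [hω.1, sub_zero]

lemma measure_hit_le [IsProbabilityMeasure P] (hB : IsBrownianMotion P B) {T : ℝ} (hT : 0 < T)
    (a : ℝ) {δ : ℝ} (hδ : 0 < δ) :
    P {ω | ∃ s, 0 ≤ s ∧ s < T ∧ B s ω = a} ≤ 2 * P {ω | a - δ ≤ B T ω} := by
  let G : ℕ → Set Ω := fun n => {ω | ∃ k ≤ n + 1, a - δ ≤ B (k * (T / (n + 1 : ℕ))) ω}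
  let H : ℕ → Set Ω := fun m => ⋂ n ≥ m, G n
  have hH : Monotone H := fun m m' hm =>
    biInter_subset_biInter_left fun n hn => le_trans hm hn
  have hHle : ∀ m, P (H m) ≤ 2 * P {ω | a - δ ≤ B T ω} := fun m => by
    refine (measure_mono (biInter_subset_of_mem (mem_Ici.2 le_rfl))).trans ?_
    refine (hB.measure_exists_grid_ge_le (h := T / (m + 1 : ℕ)) (by positivity) (a - δ)
      (m + 1)).trans_eq ?_
    rw [mul_div_cancel₀ T (by positivity : ((m + 1 : ℕ) : ℝ) ≠ 0)]
  have hsub : ∀ᵐ ω ∂P, ω ∈ {ω | ∃ s, 0 ≤ s ∧ s < T ∧ B s ω = a} → ω ∈ ⋃ m, H m := by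
    filter_upwards [hB.2.1] with ω hω
    rintro ⟨s, hs0, hsT, hsa⟩
    let k : ℕ → ℕ := fun n => ⌊s / T * (n + 1 : ℕ)⌋₊
    have hlim : Tendsto (fun n : ℕ => (k n : ℝ) * (T / (n + 1 : ℕ))) atTop (𝓝 s) := by
      have h1 := ((tendsto_nat_floor_mul_div_atTop (R := ℝ) (a := s / T) (by positivity)).comp
        (tendsto_natCast_atTop_atTop.comp (tendsto_add_atTop_nat 1))).mul_const T
      rw [div_mul_cancel₀ s hT.ne'] at h1
      refine h1.congr fun n => ?_
      simp only [k, Function.comp_apply]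
      ring
    have hlim' := (hω.2 s hs0).tendsto.comp (tendsto_nhdsWithin_iff.2
      ⟨hlim, Eventually.of_forall fun n => mem_Ici.2 (by positivity)⟩)
    rw [hsa] at hlim'
    obtain ⟨m, hm⟩ := eventually_atTop.1
      (hlim'.eventually (lt_mem_nhds (by linarith : a - δ < a)))
    refine mem_iUnion.2 ⟨m, mem_iInter₂.2 fun n hn => ⟨k n, ?_, (hm n hn).le⟩⟩
    refine Nat.floor_le_of_le ?_
    have : s / T ≤ 1 := (div_le_one hT).2 hsT.le
    exact mul_le_of_le_one_left (by positivity) this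
  calc P {ω | ∃ s, 0 ≤ s ∧ s < T ∧ B s ω = a} ≤ P (⋃ m, H m) := measure_mono_ae hsub
    _ = ⨆ m, P (H m) := hH.measure_iUnion
    _ ≤ 2 * P {ω | a - δ ≤ B T ω} := iSup_le hHle

lemma tendsto_measure_exists_increment_ge [IsProbabilityMeasure P] (hB : IsBrownianMotion P B)
    {T : ℝ} (hT : 0 < T) {δ : ℝ} (hδ : 0 < δ) :
    Tendsto (fun n : ℕ => P {ω | ∃ i < n + 1, δ ≤ gridIncrements B (T / (n + 1 : ℕ)) ω i})
      atTop (𝓝 0) := by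
  have hm : ∀ n : ℕ,
      MeasurableSet {ω | ∃ i < n + 1, δ ≤ gridIncrements B (T / (n + 1 : ℕ)) ω i} :=
    fun n => hB.measurable_gridIncrements _ (measurableSet_exists_step_ge δ (n + 1))
  have h := tendsto_measure_of_ae_tendsto_indicator_of_isFiniteMeasure (μ := P) atTop
    MeasurableSet.empty hm ?_
  · simpa using h
  filter_upwards [hB.2.1] with ω hω
  have huc := isCompact_Icc.uniformContinuousOn_of_continuous
    (hω.2.mono (Icc_subset_Ici_self : Icc 0 T ⊆ Ici 0))
  obtain ⟨η, hη, hη'⟩ := Metric.uniformContinuousOn_iff.1 huc δ hδ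
  have hlim : Tendsto (fun n : ℕ => T / ((n + 1 : ℕ) : ℝ)) atTop (𝓝 0) :=
    tendsto_const_nhds.div_atTop
      (tendsto_natCast_atTop_atTop.comp (tendsto_add_atTop_nat 1))
  filter_upwards [hlim.eventually (gt_mem_nhds hη)] with n hn
  simp only [mem_empty_iff_false, iff_false, not_exists, not_and, not_le]
  intro i hi
  have hpos : 0 < T / ((n + 1 : ℕ) : ℝ) := by positivity
  have hmem : ∀ j ≤ n + 1, (j : ℝ) * (T / ((n + 1 : ℕ) : ℝ)) ∈ Icc 0 T := fun j hj => by
    refine ⟨by positivity, ?_⟩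
    calc (j : ℝ) * (T / ((n + 1 : ℕ) : ℝ))
        ≤ ((n + 1 : ℕ) : ℝ) * (T / ((n + 1 : ℕ) : ℝ)) := by gcongr
      _ = T := mul_div_cancel₀ T (by positivity)
  refine (le_abs_self _).trans_lt (hη' _ (hmem (i + 1) hi) _ (hmem i hi.le) ?_)
  rw [Real.dist_eq, ← sub_mul]
  push_cast
  rw [add_sub_cancel_left, one_mul, ← Nat.cast_add_one, abs_of_pos hpos]
  exact hn

lemma le_measure_hit [IsProbabilityMeasure P] (hB : IsBrownianMotion P B) {T : ℝ} (hT : 0 < T)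
    {a δ : ℝ} (ha : 0 ≤ a) (hδ : 0 < δ) :
    2 * P {ω | a + δ ≤ B T ω} ≤ P {ω | ∃ s, 0 ≤ s ∧ s < T ∧ B s ω = a} := by
  set F := {ω | ∃ s, 0 ≤ s ∧ s < T ∧ B s ω = a} with hF
  have hlim := (tendsto_measure_exists_increment_ge hB hT hδ).const_add (P F)
  rw [add_zero] at hlim
  refine ge_of_tendsto' hlim fun n => ?_
  have hn : ((n + 1 : ℕ) : ℝ) ≠ 0 := by positivity
  have h := hB.two_mul_measure_ge_le (h := T / (n + 1 : ℕ)) (by positivity) ha hδ (n + 1)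
  rw [mul_div_cancel₀ T hn] at h
  refine h.trans (add_le_add_left ?_ _)
  have hsub : ∀ᵐ ω ∂P, ω ∈ {ω | ∃ k ≤ n + 1, a ≤ B (k * (T / (n + 1 : ℕ))) ω} → ω ∈ F := by
    have hne : ∀ᵐ ω ∂P, B T ω ≠ a := by
      rw [ae_iff]
      simpa using hB.measure_eq_zero hT a
    filter_upwards [hB.2.1, hne] with ω hω hωT
    rintro ⟨k, hk, hka⟩
    have hkT : (k : ℝ) * (T / ((n + 1 : ℕ) : ℝ)) ≤ T := by
      calc (k : ℝ) * (T / ((n + 1 : ℕ) : ℝ))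
          ≤ ((n + 1 : ℕ) : ℝ) * (T / ((n + 1 : ℕ) : ℝ)) := by gcongr
        _ = T := mul_div_cancel₀ T hn
    obtain ⟨s, hs, hsa⟩ := intermediate_value_Icc
      (by positivity : (0 : ℝ) ≤ k * (T / ((n + 1 : ℕ) : ℝ)))
      (hω.2.mono Icc_subset_Ici_self) ⟨by rw [hω.1]; exact ha, hka⟩
    refine ⟨s, hs.1, lt_of_le_of_ne (hs.2.trans hkT) ?_, hsa⟩
    rintro rfl
    exact hωT hsa
  exact measure_mono_ae hsub

/-- **Reflection principle**: the law of the hitting time of a nonnegative level. -/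
theorem measureReal_hit_of_nonneg [IsProbabilityMeasure P] (hB : IsBrownianMotion P B) {T : ℝ}
    (hT : 0 < T) {a : ℝ} (ha : 0 ≤ a) :
    P.real {ω | ∃ s, 0 ≤ s ∧ s < T ∧ B s ω = a} = 2 * (1 - gaussPhi (a / √T)) := by
  have hcont : Continuous fun δ : ℝ => 2 * (1 - gaussPhi ((a + δ) / √T)) :=
    continuous_const.mul (continuous_const.sub
      (continuous_gaussPhi.comp ((continuous_const.add continuous_id).div_const _)))
  have hright := (hcont.tendsto 0).mono_left (nhdsWithin_le_nhds (s := Ioi 0))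
  have hleft := ((hcont.comp continuous_neg).tendsto 0).mono_left
    (nhdsWithin_le_nhds (s := Ioi 0))
  simp only [Function.comp_apply, neg_zero, add_zero] at hright hleft
  refine le_antisymm (ge_of_tendsto hleft ?_) (le_of_tendsto hright ?_)
  · filter_upwards [self_mem_nhdsWithin] with δ hδ
    have h := ENNReal.toReal_mono (by finiteness) (hB.measure_hit_le hT a (mem_Ioi.1 hδ))
    rw [ENNReal.toReal_mul, ENNReal.toReal_ofNat] at h
    simp only [Function.comp_apply]
    rw [← sub_eq_add_neg, ← hB.measureReal_ge hT]
    exact h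
  · filter_upwards [self_mem_nhdsWithin] with δ hδ
    have h := ENNReal.toReal_mono (by finiteness) (hB.le_measure_hit hT ha (mem_Ioi.1 hδ))
    rw [ENNReal.toReal_mul, ENNReal.toReal_ofNat] at h
    rw [← hB.measureReal_ge hT]
    exact h

theorem measureReal_hit [IsProbabilityMeasure P] (hB : IsBrownianMotion P B) {T : ℝ}
    (hT : 0 < T) (a : ℝ) :
    P.real {ω | ∃ s, 0 ≤ s ∧ s < T ∧ B s ω = a} = 2 * (1 - gaussPhi (|a| / √T)) := by
  rcases le_total 0 a with ha | ha
  · rw [abs_of_nonneg ha, hB.measureReal_hit_of_nonneg hT ha]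
  · rw [abs_of_nonpos ha, ← hB.neg.measureReal_hit_of_nonneg hT (neg_nonneg.2 ha)]
    simp only [neg_inj]

end IsBrownianMotion

lemma exists_time_change_iff {lam : ℝ} (hlam : 0 < lam) {r : ℝ≥0∞} (p : ℝ → Prop) :
    (∃ t : ℝ, 0 ≤ t ∧ ENNReal.ofReal t < r ∧ p ((1 - Real.exp (-(2 * lam * t))) / (2 * lam))) ↔
      ∃ s, 0 ≤ s ∧
        s < (if r = ⊤ then 1 else 1 - Real.exp (-(2 * lam * r.toReal))) / (2 * lam) ∧ p s := by
  have hl : 0 < 2 * lam := by positivity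
  have hlt : ∀ t : ℝ, 0 ≤ t → (ENNReal.ofReal t < r ↔
      (1 - Real.exp (-(2 * lam * t))) / (2 * lam)
        < (if r = ⊤ then 1 else 1 - Real.exp (-(2 * lam * r.toReal))) / (2 * lam)) := by
    intro t ht
    rw [div_lt_div_iff_of_pos_right hl]
    split_ifs with hr
    · simp [hr, Real.exp_pos]
    · rw [ENNReal.ofReal_lt_iff_lt_toReal ht hr, sub_lt_sub_iff_left, Real.exp_lt_exp,
        neg_lt_neg_iff, mul_lt_mul_iff_right₀ hl]
  constructor
  · rintro ⟨t, ht0, htr, hp⟩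
    refine ⟨_, div_nonneg (sub_nonneg.2 (Real.exp_le_one_iff.2 ?_)) hl.le, (hlt t ht0).1 htr, hp⟩
    exact neg_nonpos.2 (by positivity)
  · rintro ⟨s, hs0, hs, hp⟩
    have hs1 : 2 * lam * s < 1 := by
      rw [lt_div_iff₀' hl] at hs
      refine hs.trans_le ?_
      split_ifs
      · exact le_rfl
      · linarith [Real.exp_pos (-(2 * lam * r.toReal))]
    have hst : (1 - Real.exp (-(2 * lam * (-Real.log (1 - 2 * lam * s) / (2 * lam))))) / (2 * lam)
        = s := by
      rw [mul_div_cancel₀ _ hl.ne', neg_neg, Real.exp_log (by linarith)]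
      field_simp
      ring
    have ht0 : 0 ≤ -Real.log (1 - 2 * lam * s) / (2 * lam) := by
      refine div_nonneg (neg_nonneg.2 (Real.log_nonpos (by linarith) ?_)) hl.le
      linarith [mul_nonneg hl.le hs0]
    exact ⟨_, ht0, (hlt _ ht0).2 (by rwa [hst]), by rwa [hst]⟩

/-- Lemma 2: for `λ > 0`, `ε > 0`, `z ∈ ℝ` and `r ∈ (0, ∞]`,
`P(∃ t ∈ [0, r), ε B((1 - e^{-2λt})/(2λ)) = z)
  = 2 (1 - Φ(|z| √(2λ) / (ε √(1 - e^{-2λr}))))`,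
where for `r = ∞` one reads `e^{-2λr} = 0`. -/
theorem prob_of_hitting_event
    {Ω : Type*} [MeasurableSpace Ω] (P : Measure Ω) [IsProbabilityMeasure P]
    (hPc : P.IsComplete)
    (B : ℝ → Ω → ℝ) (hB : IsBrownianMotion P B)
    (lam ε z : ℝ) (hlam : 0 < lam) (hε : 0 < ε)
    (r : ℝ≥0∞) (hr : 0 < r) :
    (P {ω | ∃ t : ℝ, 0 ≤ t ∧ ENNReal.ofReal t < r ∧
        ε * B ((1 - Real.exp (-(2 * lam * t))) / (2 * lam)) ω = z}).toReal
      = 2 * (1 - gaussPhi (|z| * Real.sqrt (2 * lam)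
          / (ε * Real.sqrt (if r = ⊤ then 1 else 1 - Real.exp (-(2 * lam * r.toReal)))))) := by
  set c : ℝ := if r = ⊤ then 1 else 1 - Real.exp (-(2 * lam * r.toReal)) with hc
  have hl : 0 < 2 * lam := by positivity
  have hcpos : 0 < c := by
    rw [hc]
    split_ifs with h
    · exact one_pos
    · have := mul_pos hl (ENNReal.toReal_pos hr.ne' h)
      exact sub_pos.2 (Real.exp_lt_one_iff.2 (by linarith))
  have hset : {ω | ∃ t : ℝ, 0 ≤ t ∧ ENNReal.ofReal t < r ∧
      ε * B ((1 - Real.exp (-(2 * lam * t))) / (2 * lam)) ω = z}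
      = {ω | ∃ s, 0 ≤ s ∧ s < c / (2 * lam) ∧ B s ω = z / ε} := by
    ext ω
    refine (exists_time_change_iff hlam fun s => ε * B s ω = z).trans ?_
    simp only [mem_ofPred_eq, eq_div_iff hε.ne', mul_comm ε, ← hc]
  rw [hset, ← measureReal_def, hB.measureReal_hit (div_pos hcpos hl), abs_div, abs_of_pos hε,
    Real.sqrt_div hcpos.le, div_div_div_eq]
end

section
/- Let λ > 0 and q₋ < x₀ < 0. The families (C_ε)_{ε>0} and (D_ε)_{ε>0} are asymptotically equivalent as ε → 0⁺, where C_ε = {τ_ε < ∞ and X_ε(τ_ε) = 0} and D_ε = {there exists t ≥ 0 with X_ε(t) = 0}. -/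
open MeasureTheory ProbabilityTheory Filter Topology Set

/-- Families of events `(A_ε)` and `(B_ε)` are asymptotically equivalent as `ε → 0⁺` if
`P(A_ε) > 0` for all sufficiently small `ε > 0` and `P(A_ε Δ B_ε)/P(A_ε) → 0` as `ε → 0⁺`. -/
def AsympEquivalent {Ω : Type*} [MeasurableSpace Ω] (P : Measure Ω)
    (A B : ℝ → Set Ω) : Prop :=
  (∀ᶠ ε in 𝓝[>] (0 : ℝ), 0 < P (A ε)) ∧
  Tendsto (fun ε : ℝ => (P (symmDiff (A ε) (B ε))).toReal / (P (A ε)).toReal)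
    (𝓝[>] 0) (𝓝 0)

/-- If a family of events is split according to the first index that occurs, and the event attached
to each index has conditional probability at least one half, then the union of the family costs at
most a factor two compared with the union of the intersections. -/
lemma measure_iUnion_le_two_mul_iUnion_disjointed_inter {Ω : Type*} [MeasurableSpace Ω]
    {P : Measure Ω} {A R : ℕ → Set Ω} (hA : ∀ k, MeasurableSet (A k))
    (hR : ∀ k, MeasurableSet (R k))
    (h : ∀ k, P (disjointed A k) ≤ 2 * P (disjointed A k ∩ R k)) :
    P (⋃ k, A k) ≤ 2 * P (⋃ k, disjointed A k ∩ R k) := by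
  have hd := fun k => MeasurableSet.disjointed hA k
  rw [← iUnion_disjointed, measure_iUnion (disjoint_disjointed A) hd,
    measure_iUnion (fun i j hij => (disjoint_disjointed A hij).mono inter_subset_left
      inter_subset_left) (fun k => (hd k).inter (hR k)), ← ENNReal.tsum_mul_left]
  exact ENNReal.tsum_le_tsum h

/-- If each `R k` has conditional probability at most `p` given that `k` is the first index
occurring in `A`, then `R` holds at the first index with probability at most `p`. -/
lemma measure_iUnion_disjointed_inter_le {Ω : Type*} [MeasurableSpace Ω]
    {P : Measure Ω} [IsProbabilityMeasure P] {A R : ℕ → Set Ω} {p : ENNReal}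
    (hA : ∀ k, MeasurableSet (A k))
    (h : ∀ k, P (disjointed A k ∩ R k) ≤ P (disjointed A k) * p) :
    P (⋃ k, disjointed A k ∩ R k) ≤ p :=
  calc P (⋃ k, disjointed A k ∩ R k) ≤ ∑' k, P (disjointed A k ∩ R k) := measure_iUnion_le _
    _ ≤ ∑' k, P (disjointed A k) * p := ENNReal.tsum_le_tsum h
    _ = P (⋃ k, disjointed A k) * p := by
      rw [ENNReal.tsum_mul_right,
        measure_iUnion (disjoint_disjointed A) (fun k => MeasurableSet.disjointed hA k)]
    _ ≤ 1 * p := by gcongr; exact prob_le_one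
    _ = p := one_mul p

/-- Given events `A k` measurable with respect to the past of a walk with independent increments,
the event that `k` is the first index occurring in `A` is independent of any event on the
increment of the walk between times `k` and `n`. -/
lemma measure_disjointed_inter_increment {Ω : Type*} [MeasurableSpace Ω]
    {P : Measure Ω} {S : ℕ → Ω → ℝ} (hS : ∀ k, Measurable (S k))
    (hind : iIndepFun (fun i ω => S (i + 1) ω - S i ω) P) {A : ℕ → Set Ω}
    (hA : ∀ (m : MeasurableSpace Ω) (k : ℕ),
      (∀ j ≤ k, Measurable[m] fun ω => S j ω - S 0 ω) → MeasurableSet[m] (A k))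
    {k n : ℕ} (hkn : k ≤ n) {s : Set ℝ} (hs : MeasurableSet s) :
    P (disjointed A k ∩ {ω | S n ω - S k ω ∈ s})
      = P (disjointed A k) * P {ω | S n ω - S k ω ∈ s} := by
  set ξ : ℕ → Ω → ℝ := fun i ω => S (i + 1) ω - S i ω with hξ
  set m : ℕ → MeasurableSpace Ω := fun i => MeasurableSpace.comap (ξ i) inferInstance with hm
  have hle : ∀ i, m i ≤ (inferInstance : MeasurableSpace Ω) := fun i =>
    ((hS (i + 1)).sub (hS i)).comap_le
  have hmeas : ∀ (I : Set ℕ), ∀ i ∈ I, Measurable[⨆ i ∈ I, m i] (ξ i) := fun I i hi =>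
    (comap_measurable (ξ i)).mono (le_iSup₂ (f := fun i (_ : i ∈ I) => m i) i hi) le_rfl
  have hindep := indep_iSup_of_disjoint hle ((iIndepFun_iff_iIndep _ _ _).1 hind)
    (S := Set.Iio k) (T := Set.Ici k)
    (Set.disjoint_left.2 fun i hi hi' => absurd (Set.mem_Ici.1 hi') (not_le.2 hi))
  refine (Indep_iff _ _ _).1 hindep _ _ ?_ ?_
  · have hpast : ∀ j ≤ k, Measurable[⨆ i ∈ Set.Iio k, m i] fun ω => S j ω - S 0 ω := by
      intro j hj
      have : (fun ω => S j ω - S 0 ω) = fun ω => ∑ i ∈ Finset.range j, ξ i ω := by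
        funext ω
        exact (Finset.sum_range_sub (fun i => S i ω) j).symm
      rw [this]
      exact Finset.measurable_sum _ fun i hi =>
        hmeas _ i (lt_of_lt_of_le (Finset.mem_range.1 hi) hj)
    rw [disjointed_apply]
    refine MeasurableSet.diff (hA _ k hpast) ?_
    rw [Finset.sup_eq_iSup]
    exact MeasurableSet.iUnion fun j => MeasurableSet.iUnion fun hj =>
      hA _ j fun l hl => hpast l (hl.trans (Finset.mem_Iio.1 hj).le)
  · have : (fun ω => S n ω - S k ω) = fun ω => ∑ i ∈ Finset.Ico k n, ξ i ω := by
      funext ω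
      exact (Finset.sum_Ico_sub (fun i => S i ω) hkn).symm
    have hfut : Measurable[⨆ i ∈ Set.Ici k, m i] fun ω => S n ω - S k ω := by
      rw [this]
      exact Finset.measurable_sum _ fun i hi => hmeas _ i (Finset.mem_Ico.1 hi).1
    exact hfut hs

/-- A two-barrier maximal inequality: a walk with independent increments which goes below the
barrier `g` and later above the nondecreasing barrier `h` does so with at most twice the largest
probability that the final increment from a time `k` exceeds the gap between the barriers. -/
lemma measure_below_then_above_le {Ω : Type*} [MeasurableSpace Ω]
    {P : Measure Ω} [IsProbabilityMeasure P] {S : ℕ → Ω → ℝ} (hS : ∀ k, Measurable (S k))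
    (hind : iIndepFun (fun i ω => S (i + 1) ω - S i ω) P) {n : ℕ} {g h : ℕ → ℝ}
    (hh : ∀ i j, i ≤ j → j ≤ n → h i ≤ h j) {p : ENNReal}
    (hhalf : ∀ k ≤ n, 1 ≤ 2 * P {ω | 0 ≤ S n ω - S k ω})
    (hp : ∀ k ≤ n, P {ω | h k - g k < S n ω - S k ω} ≤ p) :
    P {ω | ∃ i j, i < j ∧ j ≤ n ∧ S i ω - S 0 ω < g i ∧ h j < S j ω - S 0 ω} ≤ 2 * p := by
  set U : ℕ → Set Ω := fun i => {ω | i ≤ n ∧ S i ω - S 0 ω < g i} with hU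
  set V : ℕ → Set Ω := fun j =>
    ⋃ i, ⋃ (_ : i < j), {ω | j ≤ n ∧ S i ω - S 0 ω < g i ∧ h j < S j ω - S 0 ω} with hV
  have hUm : ∀ (m : MeasurableSpace Ω) (k : ℕ),
      (∀ j ≤ k, Measurable[m] fun ω => S j ω - S 0 ω) → MeasurableSet[m] (U k) := by
    intro m k hk
    exact MeasurableSet.inter (MeasurableSet.const _) (measurableSet_lt (hk k le_rfl)
      measurable_const)
  have hVm : ∀ (m : MeasurableSpace Ω) (k : ℕ),
      (∀ j ≤ k, Measurable[m] fun ω => S j ω - S 0 ω) → MeasurableSet[m] (V k) := by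
    intro m k hk
    refine MeasurableSet.iUnion fun i => MeasurableSet.iUnion fun hi => ?_
    exact MeasurableSet.inter (MeasurableSet.const _) (MeasurableSet.inter
      (measurableSet_lt (hk i hi.le) measurable_const)
      (measurableSet_lt measurable_const (hk k le_rfl)))
  have hS0 : ∀ k, Measurable fun ω => S k ω - S 0 ω := fun k => (hS k).sub (hS 0)
  have hUempty : ∀ k, ¬ k ≤ n → disjointed U k = ∅ := fun k hk =>
    subset_empty_iff.1 ((disjointed_subset U k).trans fun ω hω => hk hω.1)
  have hVempty : ∀ k, ¬ k ≤ n → disjointed V k = ∅ := fun k hk =>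
    subset_empty_iff.1 ((disjointed_subset V k).trans fun ω hω => by
      simp only [hV, mem_iUnion] at hω
      obtain ⟨i, _, hω⟩ := hω
      exact hk hω.1)
  have hsubset : {ω | ∃ i j, i < j ∧ j ≤ n ∧ S i ω - S 0 ω < g i ∧ h j < S j ω - S 0 ω}
      ⊆ ⋃ k, V k := by
    rintro ω ⟨i, j, hij, hj⟩
    simp only [hV, mem_iUnion]
    exact ⟨j, i, hij, hj⟩
  refine (measure_mono hsubset).trans ((measure_iUnion_le_two_mul_iUnion_disjointed_inter
    (R := fun k => {ω | 0 ≤ S n ω - S k ω}) (fun k => hVm _ k fun j _ => hS0 j)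
    (fun k => measurableSet_le measurable_const ((hS n).sub (hS k))) fun k => ?_).trans ?_)
  · by_cases hk : k ≤ n
    · have := measure_disjointed_inter_increment hS hind hVm hk (measurableSet_Ici (a := (0 : ℝ)))
      simp only [mem_Ici] at this
      rw [this, mul_left_comm]
      exact le_mul_of_one_le_right' (hhalf k hk)
    · simp [hVempty k hk]
  · gcongr
    refine (measure_mono ?_).trans (measure_iUnion_disjointed_inter_le
      (R := fun k => {ω | h k - g k < S n ω - S k ω}) (fun k => hUm _ k fun j _ => hS0 j)
      fun k => ?_)
    · refine iUnion_subset fun j ω hω => ?_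
      obtain ⟨hω, hjn⟩ := hω
      have hω := disjointed_subset V j hω
      simp only [hV, mem_iUnion] at hω
      obtain ⟨i, hij, hjn', hi, hj⟩ := hω
      classical
      have hex : ∃ k, ω ∈ U k := ⟨i, hij.le.trans hjn', hi⟩
      obtain ⟨k, hk, hki⟩ : ∃ k, ω ∈ disjointed U k ∧ k ≤ i := by
        refine ⟨Nat.find hex, ?_, Nat.find_min' hex ⟨hij.le.trans hjn', hi⟩⟩
        rw [disjointed_apply, Finset.sup_eq_iSup]
        refine ⟨Nat.find_spec hex, ?_⟩
        simp only [iSup_eq_iUnion, mem_iUnion, Finset.mem_Iio, not_exists]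
        exact fun l hl => Nat.find_min hex hl
      have hkU := (disjointed_subset U k hk).2
      have hhk := hh k j (hki.trans hij.le) hjn'
      refine mem_iUnion.2 ⟨k, hk, ?_⟩
      simp only [mem_ofPred_eq] at hjn ⊢
      linarith
    · by_cases hk : k ≤ n
      · have := measure_disjointed_inter_increment hS hind hUm hk
          (measurableSet_Ioi (a := h k - g k))
        simp only [mem_Ioi] at this
        rw [this]
        gcongr
        exact hp k hk
      · simp [hUempty k hk]

lemma gaussianReal_zero_Ici_zero (v : NNReal) : 1 ≤ 2 * gaussianReal 0 v (Set.Ici 0) := by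
  have hneg : gaussianReal 0 v (Set.Iic 0) = gaussianReal 0 v (Set.Ici 0) := by
    have h := gaussianReal_map_neg (μ := 0) (v := v)
    rw [neg_zero] at h
    conv_rhs => rw [← h]
    rw [Measure.map_apply measurable_neg measurableSet_Ici]
    congr 1
    ext x
    simp
  calc 1 = gaussianReal 0 v Set.univ := measure_univ.symm
    _ ≤ gaussianReal 0 v (Set.Iic 0) + gaussianReal 0 v (Set.Ici 0) := by
      rw [← Set.Iic_union_Ici (a := (0 : ℝ))]
      exact measure_union_le _ _
    _ = 2 * gaussianReal 0 v (Set.Ici 0) := by rw [hneg, two_mul]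

lemma gaussianReal_zero_Ici_le (v : NNReal) {c : ℝ} (hc : 0 ≤ c) :
    gaussianReal 0 v (Set.Ici c) ≤ ENNReal.ofReal (Real.exp (-c ^ 2 / (2 * v))) := by
  have hsub : HasSubgaussianMGF id v (gaussianReal 0 v) :=
    ⟨fun t => integrable_exp_mul_gaussianReal t, fun t => by simp [mgf_id_gaussianReal]⟩
  exact (ENNReal.le_ofReal_iff_toReal_le (measure_ne_top _ _) (Real.exp_pos _).le).2
    (hsub.measure_ge_le hc)

lemma le_gaussianReal_zero_Ioi {v : NNReal} (hv : v ≠ 0) {c d : ℝ} (hc : 0 ≤ c) :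
    ENNReal.ofReal ((d - c) * ((√(2 * Real.pi * v))⁻¹ * Real.exp (-d ^ 2 / (2 * v))))
      ≤ gaussianReal 0 v (Set.Ioi c) := by
  calc _ = ∫⁻ _ in Set.Ioc c d,
        ENNReal.ofReal ((√(2 * Real.pi * v))⁻¹ * Real.exp (-d ^ 2 / (2 * v))) := by
        rw [setLIntegral_const, Real.volume_Ioc, mul_comm, ENNReal.ofReal_mul (by positivity)]
    _ ≤ ∫⁻ x in Set.Ioc c d, gaussianPDF 0 v x := by
        refine setLIntegral_mono (measurable_gaussianPDF 0 v) fun x hx => ?_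
        rw [gaussianPDF, gaussianPDFReal, sub_zero]
        have hx0 : 0 ≤ x := hc.trans hx.1.le
        have hxd : x ≤ d := hx.2
        gcongr
    _ = gaussianReal 0 v (Set.Ioc c d) := (gaussianReal_apply 0 hv _).symm
    _ ≤ gaussianReal 0 v (Set.Ioi c) := measure_mono Set.Ioc_subset_Ioi_self

/-- If `u` is exponentially smaller than `d` at scale `ε ^ 2` and `d ≤ c + u`, then `u` is
negligible with respect to `c`. -/
lemma tendsto_div_of_exp_bounds {u c d : ℝ → ℝ} {α β K : ℝ} (hαβ : β < α) (hK : 0 < K)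
    (hu0 : ∀ ε, 0 ≤ u ε) (hc0 : ∀ ε, 0 ≤ c ε) (hdc : ∀ ε, d ε ≤ c ε + u ε)
    (hu : ∀ᶠ ε in 𝓝[>] (0 : ℝ), u ε ≤ 2 * Real.exp (-α / ε ^ 2))
    (hd : ∀ᶠ ε in 𝓝[>] (0 : ℝ), K * Real.exp (-β / ε ^ 2) ≤ d ε) :
    (∀ᶠ ε in 𝓝[>] (0 : ℝ), 0 < c ε) ∧ Tendsto (fun ε => u ε / c ε) (𝓝[>] 0) (𝓝 0) := by
  set r : ℝ → ℝ := fun ε => 2 / K * Real.exp (-((α - β) * (ε ^ 2)⁻¹)) with hr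
  have hr0 : Tendsto r (𝓝[>] 0) (𝓝 0) := by
    have hsq : Tendsto (fun ε : ℝ => ε ^ 2) (𝓝[>] 0) (𝓝[>] 0) := by
      refine tendsto_nhdsWithin_iff.2 ⟨?_, ?_⟩
      · have : Tendsto (fun ε : ℝ => ε ^ 2) (𝓝 0) (𝓝 (0 ^ 2)) := (continuous_pow 2).tendsto 0
        rw [zero_pow two_ne_zero] at this
        exact this.mono_left nhdsWithin_le_nhds
      · filter_upwards [self_mem_nhdsWithin] with ε hε
        exact pow_pos (Set.mem_Ioi.1 hε) 2
    have h1 := (tendsto_inv_nhdsGT_zero.comp hsq).const_mul_atTop (sub_pos.2 hαβ)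
    have h2 := (Real.tendsto_exp_neg_atTop_nhds_zero.comp h1).const_mul (2 / K)
    rwa [mul_zero] at h2
  have hur : ∀ᶠ ε in 𝓝[>] (0 : ℝ), u ε ≤ r ε * d ε := by
    filter_upwards [hu, hd] with ε hε hε'
    refine hε.trans ((le_of_eq ?_).trans (mul_le_mul_of_nonneg_left hε' (by positivity)))
    have : Real.exp (-α / ε ^ 2)
        = Real.exp (-((α - β) * (ε ^ 2)⁻¹)) * Real.exp (-β / ε ^ 2) := by
      rw [← Real.exp_add]
      ring_nf
    simp only [hr]
    rw [this]
    field_simp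
  have hrhalf : ∀ᶠ ε in 𝓝[>] (0 : ℝ), r ε < 1 / 2 := hr0.eventually_lt_const (by norm_num)
  have hpos : ∀ᶠ ε in 𝓝[>] (0 : ℝ), 0 < c ε := by
    filter_upwards [hur, hrhalf, hd] with ε h1 h2 h3
    have h4 : 0 < d ε := lt_of_lt_of_le (by positivity) h3
    nlinarith [hdc ε]
  refine ⟨hpos, squeeze_zero' (g := fun ε => 2 * r ε)
    (Eventually.of_forall fun ε => div_nonneg (hu0 ε) (hc0 ε)) ?_ (by simpa using hr0.const_mul 2)⟩
  filter_upwards [hur, hrhalf, hpos] with ε h1 h2 h3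
  have hrn : 0 ≤ r ε := by positivity
  rw [div_le_iff₀ h3]
  nlinarith [hdc ε, hu0 ε]

lemma tendsto_ceil_grid {T s : ℝ} (hT : 0 < T) (hs : 0 ≤ s) :
    Tendsto (fun n : ℕ => (⌈s / T * n⌉₊ : ℝ) * (T / n)) atTop (𝓝 s) := by
  have h := ((tendsto_nat_ceil_mul_div_atTop (div_nonneg hs hT.le)).comp
    (tendsto_natCast_atTop_atTop (R := ℝ))).mul_const T
  rw [div_mul_cancel₀ s hT.ne'] at h
  refine h.congr fun n => ?_
  simp only [Function.comp_apply]
  ring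

/-- A path which is strictly below a continuous barrier `g` and strictly above a continuous
barrier `h` at a later time before `T` does so along every fine enough regular grid. -/
lemma eventually_exists_grid {f g h : ℝ → ℝ} {T s s' : ℝ} (hT : 0 < T)
    (hf : ContinuousOn f (Set.Ici 0)) (hg : Continuous g) (hh : Continuous h)
    (hs : 0 ≤ s) (hss' : s < s') (hs' : s' < T) (h1 : f s < g s) (h2 : h s' < f s') :
    ∀ᶠ n : ℕ in atTop, ∃ i j : ℕ, i < j ∧ j ≤ n ∧
      f (i * (T / n)) < g (i * (T / n)) ∧ h (j * (T / n)) < f (j * (T / n)) := by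
  have hs0 : 0 ≤ s' := hs.trans hss'.le
  have ht := tendsto_ceil_grid hT hs
  have ht' := tendsto_ceil_grid hT hs0
  have hft : ∀ r : ℝ, 0 ≤ r →
      Tendsto (fun n : ℕ => f ((⌈r / T * n⌉₊ : ℝ) * (T / n))) atTop (𝓝 (f r)) := by
    intro r hr
    refine (hf r hr).tendsto.comp (tendsto_nhdsWithin_iff.2 ⟨tendsto_ceil_grid hT hr, ?_⟩)
    exact Eventually.of_forall fun n => Set.mem_Ici.2 (by positivity)
  filter_upwards [eventually_gt_atTop 0, ht.eventually_lt ht' hss', ht'.eventually_lt_const hs',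
    (hft s hs).eventually_lt ((hg.tendsto s).comp ht) h1,
    ((hh.tendsto s').comp ht').eventually_lt (hft s' hs0) h2] with n hn hlt hlT hbelow habove
  have hn' : (0 : ℝ) < n := by exact_mod_cast hn
  have hpos : 0 < T / n := by positivity
  refine ⟨_, _, ?_, ?_, hbelow, habove⟩
  · exact_mod_cast lt_of_mul_lt_mul_right hlt hpos.le
  · have : (⌈s' / T * n⌉₊ : ℝ) * (T / n) < n * (T / n) := by
      rwa [mul_div_cancel₀ T hn'.ne']
    exact_mod_cast (lt_of_mul_lt_mul_right this hpos.le).le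

lemma IsBrownianMotion.measure_increment {Ω : Type*} [MeasurableSpace Ω] {P : Measure Ω}
    {B : ℝ → Ω → ℝ} (hB : IsBrownianMotion P B) {s t : ℝ} (hs : 0 ≤ s) (hst : s ≤ t)
    {A : Set ℝ} (hA : MeasurableSet A) :
    P {ω | B t ω - B s ω ∈ A} = gaussianReal 0 (Real.toNNReal (t - s)) A := by
  rw [← hB.2.2.1 s t hs hst, Measure.map_apply (by have := hB.1 t; have := hB.1 s; fun_prop) hA]
  rfl

/-- The probability that the Brownian path, scaled by `ε`, goes below the barrier
`a - L √(1 - s / T)` and later, before time `T`, above the barrier `a - κ √(1 - s / T)`. -/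
lemma IsBrownianMotion.measure_below_then_above_le {Ω : Type*} [MeasurableSpace Ω]
    {P : Measure Ω} [IsProbabilityMeasure P] {B : ℝ → Ω → ℝ} (hB : IsBrownianMotion P B)
    {T ε a L κ : ℝ} (hT : 0 < T) (hε : 0 < ε) (hκ : 0 ≤ κ) (hκL : κ ≤ L) :
    P {ω | (B 0 ω = 0 ∧ ContinuousOn (fun t => B t ω) (Set.Ici (0 : ℝ))) ∧
        ∃ s s', 0 ≤ s ∧ s < s' ∧ s' < T ∧ B s ω < (a - L * √(1 - s / T)) / ε ∧
          (a - κ * √(1 - s' / T)) / ε < B s' ω}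
      ≤ 2 * ENNReal.ofReal (Real.exp (-((L - κ) ^ 2 / (2 * T)) / ε ^ 2)) := by
  set g : ℝ → ℝ := fun s => (a - L * √(1 - s / T)) / ε with hg
  set h : ℝ → ℝ := fun s => (a - κ * √(1 - s / T)) / ε with hh
  have hgc : Continuous g := by fun_prop
  have hhc : Continuous h := by fun_prop
  have hhmono : Monotone h := by
    intro x y hxy
    simp only [hh]
    gcongr
  set F : ℕ → Set Ω := fun n => {ω | ∃ i j : ℕ, i < j ∧ j ≤ n ∧
    B (i * (T / n)) ω - B ((0 : ℕ) * (T / n)) ω < g (i * (T / n)) ∧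
    h (j * (T / n)) < B (j * (T / n)) ω - B ((0 : ℕ) * (T / n)) ω} with hF
  have hFle : ∀ n, 0 < n →
      P (F n) ≤ 2 * ENNReal.ofReal (Real.exp (-((L - κ) ^ 2 / (2 * T)) / ε ^ 2)) := by
    intro n hn
    have hn' : (0 : ℝ) < n := by exact_mod_cast hn
    have hpos : 0 < T / n := by positivity
    have hmono : Monotone fun k : ℕ => (k : ℝ) * (T / n) := fun i j hij => by
      simp only
      gcongr
    have hnT : (n : ℝ) * (T / n) = T := mul_div_cancel₀ T hn'.ne'
    have ht0 : ∀ k : ℕ, 0 ≤ (k : ℝ) * (T / n) := fun k => by positivity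
    refine _root_.measure_below_then_above_le (S := fun k => B (k * (T / n)))
      (g := fun k => g (k * (T / n))) (h := fun k => h (k * (T / n)))
      (fun k => hB.1 _) ?_ (fun i j hij _ => hhmono (hmono hij)) ?_ ?_
    · exact hB.2.2.2 (fun k => k * (T / n)) hmono ht0
    · intro k hk
      have := hB.measure_increment (ht0 k) (hmono hk) (measurableSet_Ici (a := (0 : ℝ)))
      simp only [mem_Ici] at this
      rw [this]
      exact gaussianReal_zero_Ici_zero _
    · intro k hk
      have hkT : (k : ℝ) * (T / n) ≤ T := (hmono hk).trans_eq hnT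
      have h0 := ht0 k
      simp only [hnT]
      set t := (k : ℝ) * (T / n)
      have hgap : h t - g t = (L - κ) * √(1 - t / T) / ε := by
        simp only [hh, hg]
        ring
      rw [hgap]
      rcases hkT.eq_or_lt with heq | hlt
      · simp [heq, hT.ne']
      · have hsq : 0 < 1 - t / T := by
          rw [sub_pos, div_lt_one hT]
          exact hlt
        have hLκ : 0 ≤ L - κ := sub_nonneg.2 hκL
        have hinc := hB.measure_increment h0 hkT
          (measurableSet_Ici (a := (L - κ) * √(1 - t / T) / ε))
        simp only [mem_Ici] at hinc
        refine (measure_mono (t := {ω | (L - κ) * √(1 - t / T) / ε ≤ B T ω - B t ω})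
          (ofPred_subset_ofPred.2 fun ω hω => hω.le)).trans (hinc.trans_le
          ((gaussianReal_zero_Ici_le _ (by positivity)).trans_eq ?_))
        congr 2
        rw [Real.coe_toNNReal _ (sub_pos.2 hlt).le, div_pow, mul_pow, Real.sq_sqrt hsq.le]
        have : T - t ≠ 0 := (sub_pos.2 hlt).ne'
        field_simp
  have hmonoF : Monotone fun N => ⋂ n ≥ N, F n := fun M N hMN =>
    biInter_mono (fun n hn => hMN.trans hn) fun _ _ => subset_rfl
  calc _ ≤ P (⋃ N, ⋂ n ≥ N, F n) := by
        refine measure_mono ?_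
        rintro ω ⟨⟨hB0, hcont⟩, s, s', hs, hss', hs', h1, h2⟩
        obtain ⟨N, hN⟩ := eventually_atTop.1
          (eventually_exists_grid hT hcont hgc hhc hs hss' hs' h1 h2)
        refine mem_iUnion.2 ⟨N, mem_iInter₂.2 fun n hn => ?_⟩
        simpa [hF, hB0] using hN n hn
    _ = ⨆ N, P (⋂ n ≥ N, F n) := hmonoF.measure_iUnion
    _ ≤ _ := iSup_le fun N => (measure_mono (biInter_subset_of_mem
        (Nat.le_succ N))).trans (hFle (N + 1) N.succ_pos)

/-- Lemma 3: for `λ > 0` and `q₋ < x₀ < 0`, the families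
`C_ε = {τ_ε < ∞, X_ε(τ_ε) = 0}` and `D_ε = {∃ t ≥ 0, X_ε(t) = 0}` are asymptotically
equivalent as `ε → 0⁺`. -/
theorem exit_at_zero_equivalent_to_hitting_zero
    {Ω : Type*} [MeasurableSpace Ω] (P : Measure Ω) [IsProbabilityMeasure P]
    (hPc : P.IsComplete)
    (B : ℝ → Ω → ℝ) (hB : IsBrownianMotion P B)
    (lam qm x₀ : ℝ) (hlam : 0 < lam) (hqm : qm < x₀) (hx₀ : x₀ < 0)
    (X : ℝ → ℝ → Ω → ℝ)
    (hX : ∀ ε t ω, X ε t ω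
      = Real.exp (lam * t) * (x₀ + ε * B ((1 - Real.exp (-(2 * lam * t))) / (2 * lam)) ω))
    (τ : ℝ → Ω → ℝ)
    (hτ : ∀ ε ω, τ ε ω = sInf {t | 0 ≤ t ∧ (X ε t ω = qm ∨ X ε t ω = 0)})
    (C D : ℝ → Set Ω)
    (hC : ∀ ε, C ε
      = {ω | {t | 0 ≤ t ∧ (X ε t ω = qm ∨ X ε t ω = 0)}.Nonempty ∧ X ε (τ ε ω) ω = 0})
    (hD : ∀ ε, D ε = {ω | ∃ t : ℝ, 0 ≤ t ∧ X ε t ω = 0}) :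
    AsympEquivalent P C D := by
  set T : ℝ := (2 * lam)⁻¹ with hTdef
  have hT : 0 < T := by positivity
  set clock : ℝ → ℝ := fun t => (1 - Real.exp (-(2 * lam * t))) / (2 * lam) with hclock
  have hX : ∀ ε t ω, X ε t ω = Real.exp (lam * t) * (x₀ + ε * B (clock t) ω) := hX
  have hclock_nonneg : ∀ t, 0 ≤ t → 0 ≤ clock t := fun t ht =>
    div_nonneg (sub_nonneg.2 (Real.exp_le_one_iff.2 (neg_nonpos.2 (by positivity))))
      (by positivity)
  have hclock_mono : StrictMono clock := by
    intro s t hst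
    simp only [hclock]
    gcongr
  have hclock_lt : ∀ t, clock t < T := by
    intro t
    rw [hTdef, inv_eq_one_div]
    simp only [hclock]
    gcongr
    linarith [Real.exp_pos (-(2 * lam * t))]
  have hclock_cont : Continuous clock := by fun_prop
  have hclock_sqrt : ∀ t, √(1 - clock t / T) = Real.exp (-(lam * t)) := by
    intro t
    have : 1 - clock t / T = Real.exp (-(lam * t)) ^ 2 := by
      rw [← Real.exp_nat_mul]
      simp only [hclock, hTdef]
      field_simp
      push_cast
      ring_nf
    rw [this, Real.sqrt_sq (Real.exp_pos _).le]
  have hclock_surj : ∀ s, 0 ≤ s → s < T → ∃ t, 0 ≤ t ∧ clock t = s := by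
    intro s hs hsT
    have hlt : 2 * lam * s < 1 := by
      rwa [hTdef, inv_eq_one_div, lt_div_iff₀' (by positivity)] at hsT
    refine ⟨-Real.log (1 - 2 * lam * s) / (2 * lam), div_nonneg (neg_nonneg.2
      (Real.log_nonpos (by linarith) (by nlinarith))) (by positivity), ?_⟩
    simp only [hclock]
    rw [mul_div_cancel₀ _ (by positivity), neg_neg, Real.exp_log (by linarith)]
    field_simp
    ring
  have hzero : ∀ ε t ω, X ε t ω = 0 ↔ ε * B (clock t) ω = -x₀ := by
    intro ε t ω
    rw [hX, mul_eq_zero, or_iff_right (Real.exp_pos _).ne']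
    constructor <;> intro h <;> linarith
  have hbdd : ∀ ε ω, BddBelow {t | 0 ≤ t ∧ (X ε t ω = qm ∨ X ε t ω = 0)} :=
    fun ε ω => ⟨0, fun t ht => ht.1⟩
  have hCD : ∀ ε, C ε ⊆ D ε := by
    intro ε ω hω
    rw [hC] at hω
    rw [hD]
    exact ⟨τ ε ω, hτ ε ω ▸ Real.sInf_nonneg fun t ht => ht.1, hω.2⟩
  set gap : ℝ := x₀ - qm with hgap
  have hgap0 : 0 < gap := sub_pos.2 hqm
  have hupper : ∀ ε, 0 < ε → P (symmDiff (C ε) (D ε))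
      ≤ 2 * ENNReal.ofReal (Real.exp (-((-x₀ + gap / 2) ^ 2 / (2 * T)) / ε ^ 2)) := by
    intro ε hε
    have hbound := hB.measure_below_then_above_le (a := -x₀) (L := -x₀ + 3 / 4 * gap)
      (κ := gap / 4) hT hε (by positivity) (by linarith)
    rw [show -x₀ + 3 / 4 * gap - gap / 4 = -x₀ + gap / 2 by ring] at hbound
    refine (measure_mono_ae ?_).trans hbound
    filter_upwards [hB.2.1] with ω hω hmem
    refine ⟨hω, ?_⟩
    obtain ⟨hnD, hnC⟩ : ω ∈ D ε ∧ ω ∉ C ε := by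
      rcases hmem with h | h
      · exact absurd (hCD ε h.1) h.2
      · exact h
    rw [hD] at hnD
    obtain ⟨t', ht', hXt'⟩ := hnD
    have hne : {t | 0 ≤ t ∧ (X ε t ω = qm ∨ X ε t ω = 0)}.Nonempty := ⟨t', ht', Or.inr hXt'⟩
    have hclosed : IsClosed {t | 0 ≤ t ∧ (X ε t ω = qm ∨ X ε t ω = 0)} := by
      have hcont : ContinuousOn (fun t => X ε t ω) (Set.Ici 0) := by
        simp only [hX]
        have hBc : ContinuousOn (fun t => B (clock t) ω) (Set.Ici 0) :=
          hω.2.comp hclock_cont.continuousOn fun t ht => hclock_nonneg t ht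
        have hexp : Continuous fun t : ℝ => Real.exp (lam * t) := by fun_prop
        exact hexp.continuousOn.mul (continuousOn_const.add (continuousOn_const.mul hBc))
      exact hcont.preimage_isClosed_of_isClosed isClosed_Ici
        (Set.toFinite ({qm, 0} : Set ℝ)).isClosed
    have hτmem := hclosed.csInf_mem hne (hbdd ε ω)
    have hτle := csInf_le (hbdd ε ω) (show t' ∈ _ from ⟨ht', Or.inr hXt'⟩)
    rw [← hτ] at hτmem hτle
    obtain ⟨hτ0, hτX⟩ := hτmem
    have hτne : X ε (τ ε ω) ω ≠ 0 := fun h => hnC (by rw [hC]; exact ⟨hne, h⟩)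
    have hτq : X ε (τ ε ω) ω = qm := hτX.resolve_right hτne
    have hlt : τ ε ω < t' := lt_of_le_of_ne hτle fun h => hτne (h ▸ hXt')
    refine ⟨clock (τ ε ω), clock t', hclock_nonneg _ hτ0, hclock_mono hlt, hclock_lt _, ?_, ?_⟩
    · rw [hclock_sqrt, lt_div_iff₀' hε]
      have hexp := Real.exp_pos (-(lam * τ ε ω))
      have hval : x₀ + ε * B (clock (τ ε ω)) ω = Real.exp (-(lam * τ ε ω)) * qm := by
        rw [← hτq, hX, ← mul_assoc, ← Real.exp_add, neg_add_cancel, Real.exp_zero, one_mul]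
      nlinarith
    · rw [hclock_sqrt, div_lt_iff₀' hε, (hzero ε t' ω).1 hXt']
      have := Real.exp_pos (-(lam * t'))
      nlinarith
  have hTn : T.toNNReal ≠ 0 := (Real.toNNReal_pos.2 hT).ne'
  have hTc : (T.toNNReal : ℝ) = T := Real.coe_toNNReal _ hT.le
  set K : ℝ := gap / 4 * (√(2 * Real.pi * T))⁻¹ with hK
  have hlower : ∀ ε, 0 < ε → ε < 1 →
      ENNReal.ofReal (K * Real.exp (-((-x₀ + gap / 4) ^ 2 / (2 * T)) / ε ^ 2)) ≤ P (D ε) := by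
    intro ε hε hε1
    have hinc := hB.measure_increment le_rfl hT.le (measurableSet_Ioi (a := -x₀ / ε))
    rw [sub_zero] at hinc
    have hgauss := le_gaussianReal_zero_Ioi hTn (c := -x₀ / ε) (d := (-x₀ + gap / 4) / ε)
      (div_nonneg (by linarith) hε.le)
    rw [hTc] at hgauss
    refine (ENNReal.ofReal_le_ofReal ?_).trans (hgauss.trans (hinc.symm.trans_le
      (measure_mono_ae ?_)))
    · have h1 : (-x₀ + gap / 4) / ε - -x₀ / ε = gap / 4 / ε := by ring
      have h2 : -((-x₀ + gap / 4) / ε) ^ 2 / (2 * T)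
          = -((-x₀ + gap / 4) ^ 2 / (2 * T)) / ε ^ 2 := by
        field_simp
      have h3 : gap / 4 ≤ gap / 4 / ε := le_div_self (by positivity) hε hε1.le
      rw [h1, h2, hK, mul_assoc]
      gcongr
    · filter_upwards [hB.2.1] with ω hω hmem
      have hmem : -x₀ / ε < B T ω - B 0 ω := hmem
      rw [hω.1, sub_zero] at hmem
      have hpos : B 0 ω < -x₀ / ε := by
        rw [hω.1]
        exact div_pos (by linarith) hε
      obtain ⟨s, hs, hsB⟩ := intermediate_value_Ioo hT.le (hω.2.mono Set.Icc_subset_Ici_self)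
        ⟨hpos, hmem⟩
      obtain ⟨t, ht, rfl⟩ := hclock_surj s hs.1.le hs.2
      change ω ∈ D ε
      rw [hD]
      refine ⟨t, ht, (hzero ε t ω).2 ?_⟩
      simp only at hsB
      rw [hsB, mul_div_cancel₀ _ hε.ne']
  have hαβ : (-x₀ + gap / 4) ^ 2 / (2 * T) < (-x₀ + gap / 2) ^ 2 / (2 * T) := by
    gcongr
    · linarith
    · linarith
  obtain ⟨hpos, hlim⟩ := tendsto_div_of_exp_bounds (u := fun ε => (P (symmDiff (C ε) (D ε))).toReal)
    (c := fun ε => (P (C ε)).toReal) (d := fun ε => (P (D ε)).toReal) hαβ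
    (show 0 < K by positivity) (fun _ => ENNReal.toReal_nonneg) (fun _ => ENNReal.toReal_nonneg)
    (fun ε => by
      rw [← ENNReal.toReal_add (measure_ne_top _ _) (measure_ne_top _ _)]
      refine ENNReal.toReal_mono (by finiteness) ((measure_mono fun ω hω => ?_).trans
        (measure_union_le _ _))
      by_cases h : ω ∈ C ε
      · exact Or.inl h
      · exact Or.inr (Or.inr ⟨hω, h⟩))
    (by
      filter_upwards [self_mem_nhdsWithin] with ε hε
      refine ENNReal.toReal_le_of_le_ofReal (by positivity) ((hupper ε hε).trans_eq ?_)
      rw [ENNReal.ofReal_mul zero_le_two, ENNReal.ofReal_ofNat])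
    (by
      filter_upwards [Ioo_mem_nhdsGT zero_lt_one] with ε hε
      exact (ENNReal.ofReal_le_iff_le_toReal (measure_ne_top _ _)).1 (hlower ε hε.1 hε.2))
  exact ⟨hpos.mono fun ε h => (ENNReal.toReal_pos_iff.1 h).1, hlim⟩
end

section
/- Let λ > 0 and q₋ < x₀ < 0 < q₊. The families (C_ε)_{ε>0} and (E_ε)_{ε>0} are asymptotically equivalent as ε → 0⁺, where C_ε = {τ_ε < ∞ and X_ε(τ_ε) = q₊} and E_ε = {there exists t ≥ 0 with X_ε(t) = q₊}. -/
open MeasureTheory ProbabilityTheory Filter Topology Set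

lemma MeasureTheory.Filtration.measurableSet_disjointed {Ω : Type*} {mΩ : MeasurableSpace Ω}
    (F : Filtration ℕ mΩ) {A : ℕ → Set Ω} (hA : ∀ k, MeasurableSet[F k] (A k)) (k : ℕ) :
    MeasurableSet[F k] (disjointed A k) := by
  rw [disjointed_eq_inf_compl]
  exact (hA k).inter (MeasurableSet.iInter fun j => MeasurableSet.iInter fun hj =>
    (F.mono hj.le _ (hA j)).compl)

/-- The first-passage decomposition: an event forcing `D k` on the event `A k` meets `⋃ k, A k` with
probability at most `sup P (D k)` when each `D k` is independent of the past of `k`. -/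
lemma measure_inter_iUnion_le_of_indep {Ω : Type*} {mΩ : MeasurableSpace Ω} {P : Measure Ω}
    [IsProbabilityMeasure P] (F : Filtration ℕ mΩ) {A D : ℕ → Set Ω} {G : Set Ω}
    (hA : ∀ k, MeasurableSet[F k] (A k))
    (hind : ∀ k S, MeasurableSet[F k] S → P (S ∩ D k) = P S * P (D k))
    (hG : ∀ k, G ∩ A k ⊆ D k) {p : ENNReal} (hp : ∀ k, P (D k) ≤ p) :
    P (G ∩ ⋃ k, A k) ≤ p := by
  have hA' := F.measurableSet_disjointed hA
  have hsum : ∑' k, P (disjointed A k) ≤ 1 := by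
    rw [← measure_iUnion (disjoint_disjointed A) fun k => F.le k _ (hA' k)]
    exact prob_le_one
  calc P (G ∩ ⋃ k, A k) ≤ P (⋃ k, disjointed A k ∩ D k) := by
        refine measure_mono ?_
        rw [← iUnion_disjointed, inter_iUnion]
        refine iUnion_mono fun k ω hω => ⟨hω.2, hG k ⟨hω.1, disjointed_subset A k hω.2⟩⟩
    _ ≤ ∑' k, P (disjointed A k ∩ D k) := measure_iUnion_le _
    _ ≤ ∑' k, P (disjointed A k) * p := by
        refine ENNReal.tsum_le_tsum fun k => ?_
        rw [hind k _ (hA' k)]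
        gcongr
        exact hp k
    _ ≤ p := by
        rw [ENNReal.tsum_mul_right]
        exact mul_le_of_le_one_left' hsum

/-- A discrete reflection inequality: if each `D k` has probability at least `1 / 2` and is
independent of the past of `k`, and `A k ∩ D k` forces `G`, then `P (⋃ k, A k) ≤ 2 * P G`. -/
lemma measure_iUnion_le_two_mul_of_indep {Ω : Type*} {mΩ : MeasurableSpace Ω} {P : Measure Ω}
    (F : Filtration ℕ mΩ) {A D : ℕ → Set Ω} {G : Set Ω}
    (hA : ∀ k, MeasurableSet[F k] (A k)) (hD : ∀ k, MeasurableSet (D k))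
    (hind : ∀ k S, MeasurableSet[F k] S → P (S ∩ D k) = P S * P (D k))
    (hG : ∀ k, A k ∩ D k ⊆ G) (hp : ∀ k, 1 ≤ 2 * P (D k)) :
    P (⋃ k, A k) ≤ 2 * P G := by
  have hA' := F.measurableSet_disjointed hA
  calc P (⋃ k, A k) ≤ ∑' k, P (disjointed A k) := by
        rw [← iUnion_disjointed]
        exact measure_iUnion_le _
    _ ≤ ∑' k, 2 * P (disjointed A k ∩ D k) := by
        refine ENNReal.tsum_le_tsum fun k => ?_
        rw [hind k _ (hA' k), mul_left_comm]
        exact le_mul_of_one_le_right' (hp k)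
    _ = 2 * P (⋃ k, disjointed A k ∩ D k) := by
        rw [ENNReal.tsum_mul_left, measure_iUnion]
        · exact fun i j hij => (disjoint_disjointed A hij).mono inter_subset_left inter_subset_left
        · exact fun k => (F.le k _ (hA' k)).inter (hD k)
    _ ≤ 2 * P G := by
        gcongr
        exact iUnion_subset fun k ω hω => hG k ⟨disjointed_subset A k hω.1, hω.2⟩

lemma one_le_two_mul_gaussianReal_Ici (v : NNReal) : 1 ≤ 2 * gaussianReal 0 v (Ici 0) := by
  have hsymm : gaussianReal 0 v (Iic 0) = gaussianReal 0 v (Ici 0) := by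
    conv_lhs => rw [← neg_zero (G := ℝ), ← gaussianReal_map_neg,
      Measure.map_apply measurable_neg measurableSet_Iic]
    simp
  calc 1 = gaussianReal 0 v (Iic 0 ∪ Ici 0) := by simp
    _ ≤ gaussianReal 0 v (Iic 0) + gaussianReal 0 v (Ici 0) := measure_union_le _ _
    _ = 2 * gaussianReal 0 v (Ici 0) := by rw [hsymm, two_mul]

/-- The Chernoff bound for a centred Gaussian, at `r` standard deviations. -/
lemma gaussianReal_Ioi_mul_sqrt_le (v : NNReal) {r : ℝ} (hr : 0 ≤ r) :
    gaussianReal 0 v (Ioi (r * √v)) ≤ ENNReal.ofReal (Real.exp (-(r ^ 2 / 2))) := by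
  rcases eq_or_ne v 0 with rfl | hv
  · simp [gaussianReal_zero_var]
  have hsub : HasSubgaussianMGF id v (gaussianReal 0 v) :=
    ⟨fun t => integrable_exp_mul_gaussianReal t, fun t => by simp [mgf_id_gaussianReal]⟩
  have hv' : (0 : ℝ) < v := by positivity
  have htail := hsub.measure_ge_le (ε := r * √v) (by positivity)
  have hexp : -(r * √v) ^ 2 / (2 * v) = -(r ^ 2 / 2) := by
    rw [mul_pow, Real.sq_sqrt hv'.le]
    field_simp
  rw [hexp] at htail
  refine (measure_mono fun x (hx : _ < x) => ?_).trans
    ((ENNReal.le_ofReal_iff_toReal_le (measure_ne_top _ _) (Real.exp_pos _).le).2 htail)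
  exact hx.le

lemma le_gaussianReal_Ioo {v : NNReal} (hv : v ≠ 0) {a b : ℝ} (ha : 0 ≤ a) :
    ENNReal.ofReal ((√(2 * Real.pi * v))⁻¹ * Real.exp (-b ^ 2 / (2 * v)) * (b - a))
      ≤ gaussianReal 0 v (Ioo a b) := by
  rw [gaussianReal_apply _ hv, ENNReal.ofReal_mul (by positivity), ← Real.volume_Ioo,
    ← setLIntegral_const]
  refine setLIntegral_mono (measurable_gaussianPDF 0 v) fun x hx => ?_
  rw [gaussianPDF, gaussianPDFReal]
  have : (x - 0) ^ 2 ≤ b ^ 2 := by nlinarith [hx.1, hx.2]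
  gcongr

namespace IsBrownianMotion

variable {Ω : Type*} [mΩ : MeasurableSpace Ω] {P : Measure Ω} {B : ℝ → Ω → ℝ}

lemma stronglyMeasurable_sub (hB : IsBrownianMotion P B) (s t : ℝ) :
    StronglyMeasurable fun ω => B t ω - B s ω :=
  ((hB.1 t).sub (hB.1 s)).stronglyMeasurable

lemma measure_sub_mem (hB : IsBrownianMotion P B) {s t : ℝ} (hs : 0 ≤ s) (hst : s ≤ t)
    {U : Set ℝ} (hU : MeasurableSet U) :
    P {ω | B t ω - B s ω ∈ U} = gaussianReal 0 (Real.toNNReal (t - s)) U := by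
  rw [← hB.2.2.1 s t hs hst]
  exact (Measure.map_apply ((hB.1 t).sub (hB.1 s)) hU).symm

/-- The filtration generated by the increments of `B` from time `0` along the times `t k`. -/
noncomputable def sampled (hB : IsBrownianMotion P B) (t : ℕ → ℝ) : Filtration ℕ mΩ :=
  Filtration.natural (fun k ω => B (t k) ω - B 0 ω) fun k => hB.stronglyMeasurable_sub 0 (t k)

lemma measurable_sampled (hB : IsBrownianMotion P B) (t : ℕ → ℝ) (k : ℕ) :
    Measurable[hB.sampled t k] fun ω => B (t k) ω - B 0 ω :=
  (comap_measurable _).mono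
    (le_iSup₂_of_le (f := fun j (_ : j ≤ k) =>
      MeasurableSpace.comap (fun ω => B (t j) ω - B 0 ω) (borel ℝ)) k le_rfl le_rfl) le_rfl

lemma measure_inter_sub_mem (hB : IsBrownianMotion P B) {t : ℕ → ℝ} (ht : Monotone t)
    (ht0 : t 0 = 0) {T : ℝ} (htT : ∀ k, t k ≤ T) (k : ℕ) {S : Set Ω}
    (hS : MeasurableSet[hB.sampled t k] S) {U : Set ℝ} (hU : MeasurableSet U) :
    P (S ∩ {ω | B T ω - B (t k) ω ∈ U}) = P S * P {ω | B T ω - B (t k) ω ∈ U} := by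
  set s : ℕ → ℝ := fun i => if i ≤ k then t i else T with hs
  have hs_mono : Monotone s := fun i j hij => by
    simp only [hs]
    split_ifs with hi hj
    · exact ht hij
    · exact htT i
    · omega
    · rfl
  have hs_nonneg : ∀ i, 0 ≤ s i := fun i => by
    have h0 : 0 ≤ s 0 := by simp [hs, ht0]
    exact h0.trans (hs_mono i.zero_le)
  have hind := hB.2.2.2 s hs_mono hs_nonneg
  have hind' := indep_iSup_of_disjoint
    (fun i => ((hB.1 (s (i + 1))).sub (hB.1 (s i))).comap_le) hind
    (S := Iio k) (T := {k}) (by simp)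
  refine (Indep_iff _ _ _).1 hind' _ _ ?_ ?_
  · refine (iSup₂_le fun i hi => ?_ : hB.sampled t k ≤ _) _ hS
    refine measurable_iff_comap_le.1 ?_
    induction i with
    | zero => simp only [ht0, sub_self]; exact measurable_const
    | succ i ih =>
      have hik : i < k := hi
      have hincr : Measurable[⨆ i ∈ Iio k, MeasurableSpace.comap
          (fun ω => B (s (i + 1)) ω - B (s i) ω) inferInstance]
          fun ω => B (t (i + 1)) ω - B (t i) ω := by
        refine (comap_measurable _).mono (le_iSup₂_of_le (f := fun i (_ : i ∈ Iio k) =>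
          MeasurableSpace.comap (fun ω => B (s (i + 1)) ω - B (s i) ω) inferInstance) i hik ?_) le_rfl
        simp [hs, hik.le, Nat.succ_le_of_lt hik]
      convert (ih hik.le).add hincr using 1
      ext ω
      simp
  · refine le_iSup₂_of_le (f := fun i (_ : i ∈ ({k} : Set ℕ)) =>
      MeasurableSpace.comap (fun ω => B (s (i + 1)) ω - B (s i) ω) inferInstance) k rfl le_rfl _ ?_
    exact ⟨U, hU, by simp [hs]; rfl⟩

/-- Along a sequence of times in `[0, T]`, the probability of going below the curve
`a - c √(T - u)` and later above the level `a`. -/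
lemma measure_sampled_crossing_le [IsProbabilityMeasure P] (hB : IsBrownianMotion P B) {t : ℕ → ℝ}
    (ht : Monotone t) (ht0 : t 0 = 0) {T : ℝ} (htT : ∀ k, t k ≤ T) (a : ℝ) {c : ℝ} (hc : 0 ≤ c) :
    P {ω | ∃ j, (∃ i ≤ j, B (t i) ω - B 0 ω < a - c * √(T - t i)) ∧ a < B (t j) ω - B 0 ω}
      ≤ 2 * ENNReal.ofReal (Real.exp (-(c ^ 2 / 2))) := by
  have ht_nonneg : ∀ k, 0 ≤ t k := fun k => ht0 ▸ ht k.zero_le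
  set low : ℕ → Set Ω := fun i => {ω | B (t i) ω - B 0 ω < a - c * √(T - t i)} with hlow_def
  have hlow : ∀ i, MeasurableSet[hB.sampled t i] (low i) := fun i =>
    hB.measurable_sampled t i measurableSet_Iio
  set low_high : ℕ → Set Ω := fun j => (⋃ i ≤ j, low i) ∩ {ω | a < B (t j) ω - B 0 ω}
    with hlow_high_def
  have hlow_high : ∀ j, MeasurableSet[hB.sampled t j] (low_high j) := fun j =>
    MeasurableSet.inter
      (MeasurableSet.iUnion fun i => MeasurableSet.iUnion fun hi =>
        (hB.sampled t).mono hi _ (hlow i))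
      (hB.measurable_sampled t j measurableSet_Ioi)
  have hreflect : P (⋃ j, low_high j) ≤ 2 * P ({ω | a < B T ω - B 0 ω} ∩ ⋃ i, low i) := by
    refine measure_iUnion_le_two_mul_of_indep (hB.sampled t)
      (D := fun j => {ω | B T ω - B (t j) ω ∈ Ici 0}) hlow_high
      (fun j => (hB.stronglyMeasurable_sub (t j) T).measurable measurableSet_Ici)
      (fun j S hS => hB.measure_inter_sub_mem ht ht0 htT j hS measurableSet_Ici) ?_ ?_
    · rintro j ω ⟨⟨hωl, hωh⟩, hω⟩
      simp only [mem_iUnion, mem_ofPred_eq, mem_Ici] at hωl hωh hω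
      obtain ⟨i, -, hi⟩ := hωl
      exact ⟨by simp only [mem_ofPred_eq]; linarith, mem_iUnion.2 ⟨i, hi⟩⟩
    · intro j
      rw [hB.measure_sub_mem (ht_nonneg j) (htT j) measurableSet_Ici]
      exact one_le_two_mul_gaussianReal_Ici _
  have htail : P ({ω | a < B T ω - B 0 ω} ∩ ⋃ i, low i)
      ≤ ENNReal.ofReal (Real.exp (-(c ^ 2 / 2))) := by
    refine measure_inter_iUnion_le_of_indep (hB.sampled t)
      (D := fun i => {ω | B T ω - B (t i) ω ∈ Ioi (c * √(T - t i))}) hlow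
      (fun i S hS => hB.measure_inter_sub_mem ht ht0 htT i hS measurableSet_Ioi) ?_ ?_
    · rintro i ω ⟨hω, hωl⟩
      simp only [hlow_def, mem_ofPred_eq, mem_Ioi] at hω hωl ⊢
      linarith
    · intro i
      rw [hB.measure_sub_mem (ht_nonneg i) (htT i) measurableSet_Ioi]
      simpa [Real.coe_toNNReal _ (sub_nonneg.2 (htT i))] using
        gaussianReal_Ioi_mul_sqrt_le (T - t i).toNNReal hc
  refine le_trans (measure_mono ?_) (hreflect.trans (by gcongr))
  rintro ω ⟨j, ⟨i, hij, hi⟩, hj⟩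
  exact mem_iUnion.2 ⟨j, mem_iUnion₂.2 ⟨i, hij, hi⟩, hj⟩

/-- The probability that a continuous path goes below the curve `a - c √(T - u)` and later, by time
`T`, above the level `a`. -/
lemma measure_crossing_le [IsProbabilityMeasure P] (hB : IsBrownianMotion P B) {T : ℝ}
    (hT : 0 ≤ T) (a : ℝ) {c : ℝ} (hc : 0 ≤ c) :
    P {ω | ContinuousOn (fun t => B t ω) (Ici 0) ∧ ∃ u v, 0 ≤ u ∧ u ≤ v ∧ v ≤ T ∧
        B u ω - B 0 ω < a - c * √(T - u) ∧ a < B v ω - B 0 ω}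
      ≤ 2 * ENNReal.ofReal (Real.exp (-(c ^ 2 / 2))) := by
  set t : ℕ → ℕ → ℝ := fun n k => min ((k : ℝ) / n) T with ht
  set crossing : ℕ → Set Ω := fun n =>
    {ω | ∃ j, (∃ i ≤ j, B (t n i) ω - B 0 ω < a - c * √(T - t n i)) ∧ a < B (t n j) ω - B 0 ω}
    with hcrossing
  have hbound : ∀ n, P (crossing n) ≤ 2 * ENNReal.ofReal (Real.exp (-(c ^ 2 / 2))) := fun n =>
    hB.measure_sampled_crossing_le (t := t n) (fun i j hij => by simp only [ht]; gcongr)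
      (by simp [ht, hT]) (fun k => min_le_right _ _) a hc
  have hsub : {ω | ContinuousOn (fun t => B t ω) (Ici 0) ∧ ∃ u v, 0 ≤ u ∧ u ≤ v ∧ v ≤ T ∧
      B u ω - B 0 ω < a - c * √(T - u) ∧ a < B v ω - B 0 ω}
      ⊆ ⋃ m, ⋂ n ≥ m, crossing n := by
    rintro ω ⟨hcont, u, v, hu, huv, hvT, hlow, hhigh⟩
    have hgrid : ∀ w, 0 ≤ w → w ≤ T →
        Tendsto (fun n : ℕ => t n ⌊w * n⌋₊) atTop (𝓝[Ici 0] w) := fun w hw hwT => by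
      refine tendsto_nhdsWithin_iff.2 ⟨?_, Eventually.of_forall fun n => le_min (by positivity) hT⟩
      have h := ((tendsto_nat_floor_mul_div_atTop hw).comp
        (tendsto_natCast_atTop_atTop (R := ℝ))).min (tendsto_const_nhds (x := T))
      simpa [ht, min_eq_left hwT, Function.comp_def] using h
    have hpath : ∀ w, 0 ≤ w → ContinuousWithinAt (fun s => B s ω - B 0 ω) (Ici 0) w :=
      fun w hw => (hcont w hw).sub continuousWithinAt_const
    have hcurve : ContinuousWithinAt (fun s => a - c * √(T - s)) (Ici 0) u := by fun_prop
    have hev_low := ((hpath u hu).eventually_lt hcurve hlow)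
    have hev_high := (continuousWithinAt_const.eventually_lt (hpath v (hu.trans huv)) hhigh)
    have hev := ((hgrid u hu (huv.trans hvT)).eventually hev_low).and
      ((hgrid v (hu.trans huv) hvT).eventually hev_high)
    obtain ⟨m, hm⟩ := eventually_atTop.1 hev
    refine mem_iUnion.2 ⟨m, mem_iInter₂.2 fun n hn => ?_⟩
    exact ⟨_, ⟨_, Nat.floor_mono (by gcongr), (hm n hn).1⟩, (hm n hn).2⟩
  refine (measure_mono hsub).trans ?_
  rw [Monotone.measure_iUnion]
  · exact iSup_le fun m => (measure_mono (iInter₂_subset m le_rfl)).trans (hbound m)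
  · exact fun m m' hm => biInter_subset_biInter_left fun n (hn : m' ≤ n) => hm.trans hn

end IsBrownianMotion

section Path

/-- The clock `t ↦ (1 - exp (-2 λ t)) / (2 λ)` of the martingale part of the process. -/
noncomputable def clock (lam t : ℝ) : ℝ := (1 - Real.exp (-(2 * lam * t))) / (2 * lam)

lemma continuous_clock (lam : ℝ) : Continuous (clock lam) := by
  unfold clock
  fun_prop

lemma clock_strictMono {lam : ℝ} (hlam : 0 < lam) : StrictMono (clock lam) := by
  intro s t hst
  unfold clock
  gcongr

lemma clock_nonneg {lam : ℝ} (hlam : 0 < lam) {t : ℝ} (ht : 0 ≤ t) : 0 ≤ clock lam t := by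
  simpa [clock] using (clock_strictMono hlam).monotone ht

lemma clock_le {lam : ℝ} (hlam : 0 < lam) (t : ℝ) : clock lam t ≤ 1 / (2 * lam) := by
  unfold clock
  gcongr
  linarith [Real.exp_pos (-(2 * lam * t))]

lemma sqrt_mul_sqrt_sub_clock {lam : ℝ} (hlam : 0 < lam) (t : ℝ) :
    √(2 * lam) * √(1 / (2 * lam) - clock lam t) = Real.exp (-(lam * t)) := by
  rw [← Real.sqrt_mul (by positivity), Real.sqrt_eq_iff_mul_self_eq_of_pos (Real.exp_pos _),
    ← Real.exp_add, clock]
  field_simp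
  ring_nf

lemma tendsto_clock {lam : ℝ} (hlam : 0 < lam) :
    Tendsto (clock lam) atTop (𝓝 (1 / (2 * lam))) := by
  have h : Tendsto (fun t => Real.exp (-(2 * lam * t))) atTop (𝓝 0) :=
    Real.tendsto_exp_neg_atTop_nhds_zero.comp (tendsto_id.const_mul_atTop (by positivity))
  have hdiv := (h.const_sub 1).div_const (2 * lam)
  rw [sub_zero] at hdiv
  exact hdiv

variable {lam x₀ ε : ℝ} {w : ℝ → ℝ}

lemma continuousOn_path (hlam : 0 < lam) (hw : ContinuousOn w (Ici 0)) :
    ContinuousOn (fun t => Real.exp (lam * t) * (x₀ + ε * w (clock lam t))) (Ici 0) := by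
  have hcomp : ContinuousOn (fun t => w (clock lam t)) (Ici 0) :=
    hw.comp (continuous_clock lam).continuousOn fun t ht => clock_nonneg hlam ht
  exact (Continuous.continuousOn (by fun_prop)).mul
    (continuousOn_const.add (continuousOn_const.mul hcomp))

lemma exists_path_eq (hlam : 0 < lam) (hw : ContinuousOn w (Ici 0)) (hw0 : w 0 = 0) {q : ℝ}
    (hq : x₀ ≤ q) (hpos : 0 < x₀ + ε * w (1 / (2 * lam))) :
    ∃ t, 0 ≤ t ∧ Real.exp (lam * t) * (x₀ + ε * w (clock lam t)) = q := by
  have hlim : Tendsto (fun t => w (clock lam t)) atTop (𝓝 (w (1 / (2 * lam)))) := by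
    refine (hw (1 / (2 * lam)) (by simp [hlam.le])).tendsto.comp
      (tendsto_nhdsWithin_iff.2 ⟨tendsto_clock hlam, ?_⟩)
    filter_upwards [eventually_ge_atTop 0] with t ht using clock_nonneg hlam ht
  have htop : Tendsto (fun t => Real.exp (lam * t) * (x₀ + ε * w (clock lam t))) atTop atTop :=
    (Real.tendsto_exp_atTop.comp (tendsto_id.const_mul_atTop hlam)).atTop_mul_pos hpos
      ((hlim.const_mul ε).const_add x₀)
  obtain ⟨t, ht, ht0⟩ := ((htop.eventually_ge_atTop q).and (eventually_ge_atTop 0)).exists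
  obtain ⟨s, hs, hsq⟩ := intermediate_value_Icc ht0
    ((continuousOn_path hlam hw).mono Icc_subset_Ici_self)
    (show q ∈ Icc _ _ from ⟨by simpa [clock, hw0] using hq, ht⟩)
  exact ⟨s, hs.1, hsq⟩

lemma path_eq_iff (hε : ε ≠ 0) {t q : ℝ} :
    Real.exp (lam * t) * (x₀ + ε * w (clock lam t)) = q
      ↔ w (clock lam t) = -x₀ / ε + q / ε * Real.exp (-(lam * t)) := by
  rw [Real.exp_neg]
  have := Real.exp_pos (lam * t)
  constructor
  · rintro rfl
    field_simp
    ring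
  · intro h
    rw [h]
    field_simp
    ring

/-- A path that reaches `qp`, but leaves `(qm, qp)` elsewhere than at `qp`, is at `qm` before. -/
lemma exists_lt_of_exit_ne {x : ℝ → ℝ} (hx : ContinuousOn x (Ici 0)) {qm qp t : ℝ} (ht : 0 ≤ t)
    (htq : x t = qp) (hexit : x (sInf {t | 0 ≤ t ∧ (x t = qm ∨ x t = qp)}) ≠ qp) :
    ∃ s, 0 ≤ s ∧ s < t ∧ x s = qm := by
  set S := {t | 0 ≤ t ∧ (x t = qm ∨ x t = qp)} with hS
  have hclosed : IsClosed S :=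
    hx.preimage_isClosed_of_isClosed isClosed_Ici (Set.toFinite {qm, qp}).isClosed
  have hbdd : BddBelow S := ⟨0, fun s hs => hs.1⟩
  have htS : t ∈ S := ⟨ht, Or.inr htq⟩
  obtain ⟨h0, hq⟩ := hclosed.csInf_mem ⟨t, htS⟩ hbdd
  refine ⟨sInf S, h0, lt_of_le_of_ne (csInf_le hbdd htS) ?_, hq.resolve_right hexit⟩
  intro h
  exact hexit (h ▸ htq)

end Path

/-- Lemma 4: for `λ > 0` and `q₋ < x₀ < 0 < q₊`, the families
`C_ε = {τ_ε < ∞, X_ε(τ_ε) = q₊}` and `E_ε = {∃ t ≥ 0, X_ε(t) = q₊}` are asymptotically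
equivalent as `ε → 0⁺`. -/
theorem exit_at_qp_equivalent_to_hitting_qp
    {Ω : Type*} [MeasurableSpace Ω] (P : Measure Ω) [IsProbabilityMeasure P]
    (hPc : P.IsComplete)
    (B : ℝ → Ω → ℝ) (hB : IsBrownianMotion P B)
    (lam qm x₀ qp : ℝ) (hlam : 0 < lam) (hqm : qm < x₀) (hx₀ : x₀ < 0) (hqp : 0 < qp)
    (X : ℝ → ℝ → Ω → ℝ)
    (hX : ∀ ε t ω, X ε t ω
      = Real.exp (lam * t) * (x₀ + ε * B ((1 - Real.exp (-(2 * lam * t))) / (2 * lam)) ω))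
    (τ : ℝ → Ω → ℝ)
    (hτ : ∀ ε ω, τ ε ω = sInf {t | 0 ≤ t ∧ (X ε t ω = qm ∨ X ε t ω = qp)})
    (C E : ℝ → Set Ω)
    (hC : ∀ ε, C ε
      = {ω | {t | 0 ≤ t ∧ (X ε t ω = qm ∨ X ε t ω = qp)}.Nonempty ∧ X ε (τ ε ω) ω = qp})
    (hE : ∀ ε, E ε = {ω | ∃ t : ℝ, 0 ≤ t ∧ X ε t ω = qp}) :
    AsympEquivalent P C E := by
  obtain ⟨q, hxq, hqq⟩ := exists_between (neg_lt_neg hqm)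
  set T : ℝ := 1 / (2 * lam) with hT
  have hTpos : 0 < T := by positivity
  have hX' : ∀ ε t ω, X ε t ω = Real.exp (lam * t) * (x₀ + ε * B (clock lam t) ω) := hX
  have hgood := hB.2.1
  have hCE : ∀ ε, C ε ⊆ E ε := fun ε ω hω => by
    rw [hC] at hω
    rw [hE]
    exact ⟨τ ε ω, hτ ε ω ▸ Real.sInf_nonneg fun t ht => ht.1, hω.2⟩
  have hdiff : ∀ ε, 0 < ε → P (E ε \ C ε)
      ≤ ENNReal.ofReal (2 * Real.exp (-(lam * q ^ 2 / ε ^ 2))) := fun ε hε => by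
    have hcross := hB.measure_crossing_le hTpos.le (-x₀ / ε) (c := q / ε * √(2 * lam))
      (by have : 0 < q := by linarith
          positivity)
    have hexp : (q / ε * √(2 * lam)) ^ 2 / 2 = lam * q ^ 2 / ε ^ 2 := by
      rw [mul_pow, Real.sq_sqrt (by positivity)]
      field_simp
    rw [hexp] at hcross
    rw [ENNReal.ofReal_mul (by norm_num), ENNReal.ofReal_ofNat]
    refine (measure_mono_ae ?_).trans hcross
    filter_upwards [hgood] with ω ⟨hω0, hωc⟩ hω
    obtain ⟨hωE, hωC⟩ := hω
    rw [hE] at hωE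
    obtain ⟨t, ht, htq⟩ := hωE
    have hexit : X ε (sInf {t | 0 ≤ t ∧ (X ε t ω = qm ∨ X ε t ω = qp)}) ω ≠ qp := fun h => by
      refine hωC ?_
      rw [hC]
      exact ⟨⟨t, ht, Or.inr htq⟩, by rwa [hτ]⟩
    have hcont : ContinuousOn (fun t => X ε t ω) (Ici 0) := by
      simp only [hX']
      exact continuousOn_path hlam hωc
    obtain ⟨s, hs, hst, hsq⟩ := exists_lt_of_exit_ne hcont ht htq hexit
    simp only [hX'] at hsq htq
    have hws := (path_eq_iff (w := fun u => B u ω) hε.ne').1 hsq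
    have hwt := (path_eq_iff (w := fun u => B u ω) hε.ne').1 htq
    refine ⟨hωc, clock lam s, clock lam t, clock_nonneg hlam hs,
      (clock_strictMono hlam).monotone hst.le, clock_le hlam t, ?_, ?_⟩
    · rw [mul_assoc, sqrt_mul_sqrt_sub_clock hlam, hω0, hws]
      have : qm / ε * Real.exp (-(lam * s)) < -q / ε * Real.exp (-(lam * s)) := by
        gcongr
        linarith
      rw [neg_div, neg_mul] at this
      linarith
    · rw [hω0, hwt]
      have : 0 < qp / ε * Real.exp (-(lam * t)) := by positivity
      linarith
  set K : ℝ := (√(2 * Real.pi * T))⁻¹ * (q + x₀) with hK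
  have hKpos : 0 < K := mul_pos (by positivity) (by linarith)
  have hhit : ∀ ε, 0 < ε → ENNReal.ofReal (K / ε * Real.exp (-(lam * q ^ 2 / ε ^ 2)))
      ≤ P (E ε) := fun ε hε => by
    have hv : T.toNNReal ≠ 0 := by simpa using hTpos
    have hlower := le_gaussianReal_Ioo hv (a := -x₀ / ε) (b := q / ε)
      (div_nonneg (by linarith) hε.le)
    have heq : (√(2 * Real.pi * T))⁻¹ * Real.exp (-(q / ε) ^ 2 / (2 * T)) * (q / ε - -x₀ / ε)
        = K / ε * Real.exp (-(lam * q ^ 2 / ε ^ 2)) := by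
      have : -(q / ε) ^ 2 / (2 * T) = -(lam * q ^ 2 / ε ^ 2) := by
        rw [hT]
        field_simp
      rw [this, hK]
      ring
    rw [Real.coe_toNNReal _ hTpos.le, heq] at hlower
    have hlaw := hB.measure_sub_mem le_rfl hTpos.le (measurableSet_Ioo (a := -x₀ / ε) (b := q / ε))
    rw [sub_zero] at hlaw
    rw [← hlaw] at hlower
    refine hlower.trans (measure_mono_ae ?_)
    filter_upwards [hgood] with ω ⟨hω0, hωc⟩ hω
    have hωT : -x₀ / ε < B T ω := by simpa [hω0] using hω.1
    rw [div_lt_iff₀ hε] at hωT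
    obtain ⟨t, ht, htq⟩ := exists_path_eq (w := fun u => B u ω) (ε := ε) hlam hωc hω0
      (hx₀.le.trans hqp.le) (by linarith)
    exact (hE ε).symm ▸ ⟨t, ht, by rwa [hX']⟩
  have hratio : ∀ ε, 0 < ε → P.real (E ε \ C ε) ≤ 2 * ε / K * P.real (E ε) := fun ε hε => by
    have h1 : P.real (E ε \ C ε) ≤ 2 * Real.exp (-(lam * q ^ 2 / ε ^ 2)) :=
      ENNReal.toReal_le_of_le_ofReal (by positivity) (hdiff ε hε)
    have h2 : K / ε * Real.exp (-(lam * q ^ 2 / ε ^ 2)) ≤ P.real (E ε) :=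
      (ENNReal.ofReal_le_iff_le_toReal (measure_ne_top _ _)).1 (hhit ε hε)
    calc P.real (E ε \ C ε) ≤ 2 * Real.exp (-(lam * q ^ 2 / ε ^ 2)) := h1
      _ = 2 * ε / K * (K / ε * Real.exp (-(lam * q ^ 2 / ε ^ 2))) := by field_simp
      _ ≤ 2 * ε / K * P.real (E ε) := by gcongr
  have hEpos : ∀ ε, 0 < ε → 0 < P.real (E ε) := fun ε hε =>
    lt_of_lt_of_le (by positivity)
      ((ENNReal.ofReal_le_iff_le_toReal (measure_ne_top _ _)).1 (hhit ε hε))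
  have hsmall : ∀ᶠ ε in 𝓝[>] (0 : ℝ), 0 < ε ∧ ε < K / 4 :=
    Ioo_mem_nhdsGT (by positivity)
  have hhalf : ∀ ε, 0 < ε → ε < K / 4 → P.real (E ε) ≤ 2 * P.real (C ε) := fun ε hε hεK => by
    have hsplit : P.real (E ε) ≤ P.real (C ε) + P.real (E ε \ C ε) := by
      conv_lhs => rw [← union_sdiff_cancel (hCE ε)]
      exact measureReal_union_le _ _
    have hle : 2 * ε / K ≤ 1 / 2 := by
      rw [div_le_div_iff₀ hKpos (by norm_num)]
      linarith
    have := mul_le_mul_of_nonneg_right hle (hEpos ε hε).le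
    linarith [hratio ε hε]
  have hCpos : ∀ ε, 0 < ε → ε < K / 4 → 0 < P.real (C ε) := fun ε hε hεK => by
    linarith [hhalf ε hε hεK, hEpos ε hε]
  refine ⟨?_, ?_⟩
  · filter_upwards [hsmall] with ε hε
    exact (ENNReal.toReal_pos_iff.1 (hCpos ε hε.1 hε.2)).1
  · refine squeeze_zero' (g := fun ε => 4 * ε / K) (Eventually.of_forall fun ε => by positivity) ?_ ?_
    · filter_upwards [hsmall] with ε hε
      rw [symmDiff_of_le (hCE ε)]
      change P.real (E ε \ C ε) / P.real (C ε) ≤ _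
      rw [div_le_iff₀ (hCpos ε hε.1 hε.2)]
      calc P.real (E ε \ C ε) ≤ 2 * ε / K * P.real (E ε) := hratio ε hε.1
        _ ≤ 2 * ε / K * (2 * P.real (C ε)) := by
          have := hε.1
          gcongr
          exact hhalf ε hε.1 hε.2
        _ = 4 * ε / K * P.real (C ε) := by ring
    · have : Tendsto (fun ε : ℝ => 4 * ε / K) (𝓝 0) (𝓝 (4 * 0 / K)) :=
        Continuous.tendsto (by fun_prop) 0
      simpa using this.mono_left nhdsWithin_le_nhds
end

section
/- Let λ > 0 and q₋ < x₀ < 0 < q₊. The families (E_ε)_{ε>0} and (F_ε)_{ε>0} are asymptotically equivalent as ε → 0⁺, where E_ε = {there exists t ≥ 0 with X_ε(t) = q₊} and F_ε = {x₀ + ε·B(1/(2λ)) > 0}. -/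
open MeasureTheory ProbabilityTheory Filter Topology Set

namespace IsBrownianMotion

variable {Ω : Type*} [MeasurableSpace Ω] {P : Measure Ω} {B : ℝ → Ω → ℝ}

/-- The path observed at the times `t 0 ≤ ⋯ ≤ t k` is independent of a later increment. -/
theorem indepFun_path_increment (hB : IsBrownianMotion P B) {t : ℕ → ℝ}
    (ht : Monotone t) (ht0 : ∀ i, 0 ≤ t i) {T : ℝ} {k : ℕ} (hk : t k ≤ T) :
    IndepFun (fun ω (j : ℕ) => B (t (min j k)) ω - B (t 0) ω)
      (fun ω => B T ω - B (t k) ω) P := by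
  obtain ⟨hmeas, -, -, hind⟩ := hB
  set r : ℕ → ℝ := fun i => if i ≤ k then t i else T with hr
  have hr_mono : Monotone r := by
    intro i j hij
    simp only [hr]
    split_ifs with h1 h2
    · exact ht hij
    · exact (ht h1).trans hk
    · omega
    · exact le_rfl
  have hr0 : ∀ i, 0 ≤ r i := by
    intro i
    simp only [hr]
    split_ifs
    · exact ht0 i
    · exact (ht0 k).trans hk
  have h := (hind r hr_mono hr0).indepFun_finset (Finset.range k) {k} (by simp)
    (fun i => (hmeas _).sub (hmeas _))
  have hlast : Measurable fun v : ({k} : Finset ℕ) → ℝ => v ⟨k, by simp⟩ :=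
    measurable_pi_apply _
  have h' := h.comp
    (φ := fun (v : Finset.range k → ℝ) (j : ℕ) =>
      ∑ i : Finset.range k, if (i : ℕ) < j then v i else 0)
    (by
      refine measurable_pi_lambda _ fun j => Finset.measurable_sum _ fun i _ => ?_
      split_ifs
      · exact measurable_pi_apply i
      · exact measurable_const)
    hlast
  convert h' using 1
  · ext ω j
    simp only [Function.comp]
    rw [Finset.sum_coe_sort (Finset.range k)
      (fun i => if i < j then B (r (i + 1)) ω - B (r i) ω else 0), ← Finset.sum_filter]
    have hf : (Finset.range k).filter (· < j) = Finset.range (min j k) := by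
      ext i; simp; omega
    rw [hf, Finset.sum_range_sub (fun i => B (r i) ω)]
    simp [hr]
  · ext ω
    simp [hr]

/-- If, from each level `u i` at time `t i`, falling back below `v` by time `T` has probability at
most `p`, then the same bound holds conditionally on exceeding one of these levels. -/
theorem measure_exceed_inter_le (hB : IsBrownianMotion P B) {t u : ℕ → ℝ}
    (ht : Monotone t) (ht0 : t 0 = 0) {T v : ℝ} (hT : ∀ i, t i ≤ T) {p : ENNReal}
    (hp : ∀ i, P {ω | B T ω - B (t i) ω ≤ v - u i} ≤ p) :
    P ((⋃ i, {ω | u i < B (t i) ω - B 0 ω}) ∩ {ω | B T ω - B 0 ω ≤ v}) ≤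
      p * P (⋃ i, {ω | u i < B (t i) ω - B 0 ω}) := by
  have hmeas := hB.1
  set A : ℕ → Set Ω := fun i => {ω | u i < B (t i) ω - B 0 ω} with hA
  have hAm : ∀ i, MeasurableSet (A i) := fun i =>
    measurableSet_lt measurable_const ((hmeas _).sub (hmeas _))
  have hDm : ∀ i, MeasurableSet (disjointed A i) := fun i => MeasurableSet.disjointed hAm i
  rw [← iUnion_disjointed, Set.iUnion_inter,
    measure_iUnion (disjoint_disjointed A) hDm, ← ENNReal.tsum_mul_left]
  refine (measure_iUnion_le _).trans (ENNReal.tsum_le_tsum fun k => ?_)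
  have hind := hB.indepFun_path_increment ht (fun i => ht0 ▸ ht (Nat.zero_le i)) (hT k)
  set D : Set (ℕ → ℝ) := {f | u k < f k} ∩ ⋂ j, ⋂ (_ : j < k), {f | u j < f j}ᶜ with hD
  have hDmeas : MeasurableSet D :=
    (measurableSet_lt measurable_const (measurable_pi_apply k)).inter
      (MeasurableSet.iInter fun j => MeasurableSet.iInter fun _ =>
        (measurableSet_lt measurable_const (measurable_pi_apply j)).compl)
  have hDeq : disjointed A k = (fun ω (j : ℕ) => B (t (min j k)) ω - B (t 0) ω) ⁻¹' D := by
    rw [disjointed_eq_inter_compl]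
    ext ω
    simp only [hA, hD, ht0, Set.mem_inter_iff, Set.mem_iInter, Set.mem_compl_iff,
      Set.mem_ofPred_eq, Set.mem_preimage, min_self]
    refine and_congr_right fun _ => forall₂_congr fun j hj => ?_
    rw [min_eq_left hj.le]
  calc P (disjointed A k ∩ {ω | B T ω - B 0 ω ≤ v})
      ≤ P (disjointed A k ∩ (fun ω => B T ω - B (t k) ω) ⁻¹' Iic (v - u k)) := by
        refine measure_mono fun ω hω => ⟨hω.1, ?_⟩
        have h1 : u k < B (t k) ω - B 0 ω := disjointed_subset A k hω.1
        have h2 : B T ω - B 0 ω ≤ v := hω.2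
        simp only [Set.mem_preimage, Set.mem_Iic]
        linarith
    _ = P (disjointed A k) * P ((fun ω => B T ω - B (t k) ω) ⁻¹' Iic (v - u k)) := by
        rw [hDeq]
        exact hind.measure_inter_preimage_eq_mul _ _ hDmeas measurableSet_Iic
    _ ≤ p * P (disjointed A k) := by
        rw [mul_comm]
        gcongr
        exact hp k

theorem measure_increment_le_neg [IsProbabilityMeasure P] (hB : IsBrownianMotion P B) {s t c : ℝ}
    (hs : 0 ≤ s) (hst : s ≤ t) (hc : 0 < c) :
    P {ω | B t ω - B s ω ≤ -c} ≤ ENNReal.ofReal ((t - s) / c ^ 2) := by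
  have hm : Measurable fun ω => B t ω - B s ω := (hB.1 t).sub (hB.1 s)
  have h1 : P {ω | B t ω - B s ω ≤ -c} =
      gaussianReal 0 (Real.toNNReal (t - s)) (Iic (-c)) := by
    rw [← hB.2.2.1 s t hs hst, Measure.map_apply hm measurableSet_Iic]
    rfl
  have h2 := meas_ge_le_variance_div_sq
    (memLp_id_gaussianReal (μ := 0) (v := Real.toNNReal (t - s)) 2) hc
  rw [variance_id_gaussianReal, Real.coe_toNNReal _ (sub_nonneg.2 hst)] at h2
  simp only [id, integral_id_gaussianReal, sub_zero] at h2
  rw [h1]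
  refine (measure_mono fun x hx => ?_).trans h2
  have hx' : x ≤ -c := hx
  exact (le_neg.1 hx').trans (neg_le_abs x)

theorem measure_lt_pos (hB : IsBrownianMotion P B) {T : ℝ} (hT : 0 < T) (v : ℝ) :
    0 < P {ω | v < B T ω - B 0 ω} := by
  have hm : Measurable fun ω => B T ω - B 0 ω := (hB.1 T).sub (hB.1 0)
  have h1 : P {ω | v < B T ω - B 0 ω} =
      gaussianReal 0 (Real.toNNReal (T - 0)) (Ioi v) := by
    rw [← hB.2.2.1 0 T le_rfl hT.le, Measure.map_apply hm measurableSet_Ioi]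
    rfl
  rw [h1, pos_iff_ne_zero]
  intro h0
  have := gaussianReal_absolutelyContinuous' 0
    (v := Real.toNNReal (T - 0)) (by simpa using hT) h0
  simp at this

end IsBrownianMotion

/-- The dyadic grid of mesh `T / 2 ^ n` on `[0, T)`, constant after its last point. -/
noncomputable def dyadicTime (T : ℝ) (n i : ℕ) : ℝ := T * ((min i (2 ^ n - 1) : ℕ) / 2 ^ n)

theorem dyadicTime_zero (T : ℝ) (n : ℕ) : dyadicTime T n 0 = 0 := by simp [dyadicTime]

theorem dyadicTime_monotone {T : ℝ} (hT : 0 ≤ T) (n : ℕ) : Monotone (dyadicTime T n) := by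
  intro i j hij
  unfold dyadicTime
  gcongr

theorem dyadicTime_nonneg {T : ℝ} (hT : 0 ≤ T) (n i : ℕ) : 0 ≤ dyadicTime T n i := by
  unfold dyadicTime
  positivity

theorem dyadicTime_lt {T : ℝ} (hT : 0 < T) (n i : ℕ) : dyadicTime T n i < T := by
  unfold dyadicTime
  refine mul_lt_of_lt_one_right hT ((div_lt_one (by positivity)).2 ?_)
  have h : min i (2 ^ n - 1) < 2 ^ n := by
    have := Nat.two_pow_pos n
    omega
  exact_mod_cast h

theorem exists_dyadicTime_succ_eq (T : ℝ) (n i : ℕ) :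
    ∃ j, dyadicTime T (n + 1) j = dyadicTime T n i := by
  refine ⟨2 * min i (2 ^ n - 1), ?_⟩
  unfold dyadicTime
  have h : min (2 * min i (2 ^ n - 1)) (2 ^ (n + 1) - 1) = 2 * min i (2 ^ n - 1) := by
    rw [pow_succ]
    omega
  rw [h, pow_succ]
  push_cast
  field_simp

theorem exists_dyadicTime_tendsto {T s : ℝ} (hT : 0 < T) (hs : s ∈ Ico 0 T) :
    ∃ i : ℕ → ℕ, Tendsto (fun n => dyadicTime T n (i n)) atTop (𝓝 s) := by
  refine ⟨fun n => ⌊s / T * 2 ^ n⌋₊, ?_⟩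
  have hsT : 0 ≤ s / T := div_nonneg hs.1 hT.le
  have h := (tendsto_nat_floor_mul_div_atTop hsT).comp
    (tendsto_pow_atTop_atTop_of_one_lt (one_lt_two : (1 : ℝ) < 2))
  have h' := h.const_mul T
  rw [mul_div_cancel₀ s hT.ne'] at h'
  refine h'.congr fun n => ?_
  have hlt : ⌊s / T * 2 ^ n⌋₊ < 2 ^ n := by
    rw [Nat.floor_lt (by positivity)]
    push_cast
    exact mul_lt_of_lt_one_left (by positivity) ((div_lt_one hT).2 hs.2)
  simp only [dyadicTime, Function.comp]
  rw [min_eq_left (by omega)]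

/-- The event that `B - B 0` exceeds the boundary `u` at some dyadic time in `[0, T)`. -/
def dyadicExceed {Ω : Type*} (B : ℝ → Ω → ℝ) (u : ℝ → ℝ) (T : ℝ) : Set Ω :=
  ⋃ n, ⋃ i, {ω | u (dyadicTime T n i) < B (dyadicTime T n i) ω - B 0 ω}

theorem mem_dyadicExceed {Ω : Type*} {B : ℝ → Ω → ℝ} {u : ℝ → ℝ} {T s : ℝ} {ω : Ω} (hT : 0 < T)
    (hu : Continuous u) (hB : ContinuousOn (fun t => B t ω) (Ici 0)) (hs : s ∈ Ico 0 T)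
    (h : u s < B s ω - B 0 ω) : ω ∈ dyadicExceed B u T := by
  obtain ⟨i, hi⟩ := exists_dyadicTime_tendsto hT hs
  have hi' : Tendsto (fun n => dyadicTime T n (i n)) atTop (𝓝[Ici 0] s) :=
    tendsto_nhdsWithin_iff.2 ⟨hi, Eventually.of_forall fun n => dyadicTime_nonneg hT.le n _⟩
  have hBs := ((hB s hs.1).tendsto.comp hi').sub_const (B 0 ω)
  obtain ⟨n, hn⟩ := (((hu.tendsto s).comp hi).eventually_lt hBs h).exists
  exact Set.mem_iUnion₂.2 ⟨n, i n, hn⟩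

theorem IsBrownianMotion.measure_dyadicExceed_inter_le {Ω : Type*} [MeasurableSpace Ω]
    {P : Measure Ω} {B : ℝ → Ω → ℝ} (hB : IsBrownianMotion P B) {u : ℝ → ℝ} {T v : ℝ} (hT : 0 < T)
    {p : ENNReal} (hp : ∀ s ∈ Ico 0 T, P {ω | B T ω - B s ω ≤ v - u s} ≤ p) :
    P (dyadicExceed B u T ∩ {ω | B T ω - B 0 ω ≤ v}) ≤ p * P (dyadicExceed B u T) := by
  have hmono : Monotone fun n =>
      (⋃ i, {ω | u (dyadicTime T n i) < B (dyadicTime T n i) ω - B 0 ω}) ∩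
        {ω | B T ω - B 0 ω ≤ v} := by
    refine monotone_nat_of_le_succ fun n => Set.inter_subset_inter_left _ ?_
    refine Set.iUnion_subset fun i => ?_
    obtain ⟨j, hj⟩ := exists_dyadicTime_succ_eq T n i
    rw [← hj]
    exact Set.subset_iUnion
      (fun i => {ω | u (dyadicTime T (n + 1) i) < B (dyadicTime T (n + 1) i) ω - B 0 ω}) j
  rw [dyadicExceed, Set.iUnion_inter, hmono.measure_iUnion]
  refine iSup_le fun n => ?_
  refine (hB.measure_exceed_inter_le (t := dyadicTime T n) (u := fun i => u (dyadicTime T n i))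
    (dyadicTime_monotone hT.le n)
    (dyadicTime_zero T n) (fun i => (dyadicTime_lt hT n i).le) fun i =>
      hp _ ⟨dyadicTime_nonneg hT.le n i, dyadicTime_lt hT n i⟩).trans ?_
  refine mul_le_mul_right (measure_mono ?_) p
  exact Set.subset_iUnion
    (fun n => ⋃ i, {ω | u (dyadicTime T n i) < B (dyadicTime T n i) ω - B 0 ω}) n

theorem sqrt_exp_neg_two_mul (x : ℝ) : √(Real.exp (-(2 * x))) = Real.exp (-x) := by
  rw [show -(2 * x) = -x + -x by ring, Real.exp_add, Real.sqrt_mul_self (Real.exp_pos _).le]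

/-- In the clock `s = (1 - exp (-2 * lam * t)) / (2 * lam)`, hitting `q` is hitting a curve. -/
theorem exists_exp_mul_eq_iff {lam : ℝ} (hlam : 0 < lam) (q : ℝ) (f : ℝ → ℝ) :
    (∃ t : ℝ, 0 ≤ t ∧
      Real.exp (lam * t) * f ((1 - Real.exp (-(2 * lam * t))) / (2 * lam)) = q) ↔
    ∃ s ∈ Ico 0 (1 / (2 * lam)), f s = q * √(1 - 2 * lam * s) := by
  have key : ∀ t y : ℝ, Real.exp (lam * t) * y = q ↔ y = q * Real.exp (-(lam * t)) := by
    intro t y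
    rw [Real.exp_neg, ← div_eq_mul_inv, eq_div_iff (Real.exp_pos _).ne', mul_comm]
  constructor
  · rintro ⟨t, ht, h⟩
    refine ⟨(1 - Real.exp (-(2 * lam * t))) / (2 * lam), ⟨?_, ?_⟩, ?_⟩
    · have : Real.exp (-(2 * lam * t)) ≤ 1 := Real.exp_le_one_iff.2 (by
        have : 0 ≤ 2 * lam * t := by positivity
        linarith)
      exact div_nonneg (by linarith) (by positivity)
    · have := Real.exp_pos (-(2 * lam * t))
      gcongr
      linarith
    · rw [(key t _).1 h, mul_div_cancel₀ _ (by positivity), sub_sub_cancel, mul_assoc,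
        sqrt_exp_neg_two_mul]
  · rintro ⟨s, ⟨hs0, hs⟩, h⟩
    have hpos : 0 < 1 - 2 * lam * s := by
      rw [lt_div_iff₀ (by positivity)] at hs
      linarith
    have he : Real.exp (-(2 * lam * (-Real.log (1 - 2 * lam * s) / (2 * lam)))) =
        1 - 2 * lam * s := by
      rw [mul_div_cancel₀ _ (by positivity), neg_neg, Real.exp_log hpos]
    refine ⟨-Real.log (1 - 2 * lam * s) / (2 * lam), ?_, ?_⟩
    · refine div_nonneg (neg_nonneg.2 (Real.log_nonpos hpos.le ?_)) (by positivity)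
      have : 0 ≤ 2 * lam * s := by positivity
      linarith
    · rw [key, he, sub_sub_cancel, mul_div_cancel_left₀ _ (by positivity), h,
        ← sqrt_exp_neg_two_mul, ← mul_assoc, he]

section HittingCurve

variable {Ω : Type*} [MeasurableSpace Ω] {P : Measure Ω} {B : ℝ → Ω → ℝ}

/-- Ending above `-x₀` at the horizon forces the path to cross the curve before the horizon. -/
theorem exists_eq_curve_of_pos {lam x₀ q ε : ℝ} {b : ℝ → ℝ} (hlam : 0 < lam) (hx₀ : x₀ < 0)
    (hq : 0 < q) (hb0 : b 0 = 0) (hb : ContinuousOn b (Ici 0))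
    (hpos : 0 < x₀ + ε * b (1 / (2 * lam))) :
    ∃ s ∈ Ico 0 (1 / (2 * lam)), x₀ + ε * b s = q * √(1 - 2 * lam * s) := by
  have hcont : ContinuousOn (fun s => x₀ + ε * b s - q * √(1 - 2 * lam * s))
      (Icc 0 (1 / (2 * lam))) := by
    have := hb.mono (Icc_subset_Ici_self : Icc 0 (1 / (2 * lam)) ⊆ Ici 0)
    fun_prop
  have hend : 2 * lam * (1 / (2 * lam)) = 1 := mul_one_div_cancel (by positivity)
  obtain ⟨s, hs, h⟩ := intermediate_value_Ioo (by positivity) hcont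
    (show (0 : ℝ) ∈ Ioo _ _ by
      constructor
      · simp only [hb0, mul_zero, sub_zero, Real.sqrt_one]
        linarith
      · simp only [hend, sub_self, Real.sqrt_zero, mul_zero, sub_zero]
        exact hpos)
  exact ⟨s, Ioo_subset_Ico_self hs, sub_eq_zero.1 h⟩

theorem IsBrownianMotion.measure_fall_from_curve_le [IsProbabilityMeasure P]
    (hB : IsBrownianMotion P B) {lam x₀ q ε s : ℝ} (hlam : 0 < lam) (hq : 0 < q) (hε : 0 < ε)
    (hs : s ∈ Ico 0 (1 / (2 * lam))) :
    P {ω | B (1 / (2 * lam)) ω - B s ω ≤ -x₀ / ε - (-x₀ + q * √(1 - 2 * lam * s)) / ε} ≤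
      ENNReal.ofReal (ε ^ 2 / (2 * lam * q ^ 2)) := by
  have hpos : 0 < 1 - 2 * lam * s := by
    have := (lt_div_iff₀ (by positivity)).1 hs.2
    linarith
  have hc : 0 < q * √(1 - 2 * lam * s) / ε := by positivity
  convert hB.measure_increment_le_neg hs.1 hs.2.le hc using 2
  · ext ω
    rw [Set.mem_ofPred_eq, Set.mem_ofPred_eq, ← sub_div, sub_add_cancel_left, neg_div]
  · rw [div_pow, mul_pow, Real.sq_sqrt hpos.le]
    field_simp

/-- The event of reaching the curve but ending below `-x₀` is negligible with respect to the event
of ending above `-x₀`, with an explicit rate. -/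
theorem IsBrownianMotion.measureReal_symmDiff_le [IsProbabilityMeasure P]
    (hB : IsBrownianMotion P B) {lam x₀ q ε : ℝ} (hlam : 0 < lam) (hx₀ : x₀ < 0) (hq : 0 < q)
    (hε : 0 < ε) (hsmall : 2 * ε ^ 2 / (lam * q ^ 2) ≤ 1 / 2) {E F : Set Ω}
    (hE : E = {ω | ∃ s ∈ Ico 0 (1 / (2 * lam)), x₀ + ε * B s ω = q * √(1 - 2 * lam * s)})
    (hF : F = {ω | 0 < x₀ + ε * B (1 / (2 * lam)) ω}) :
    0 < P.real E ∧ P.real (symmDiff E F) ≤ 2 * (2 * ε ^ 2 / (lam * q ^ 2)) * P.real E := by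
  set T : ℝ := 1 / (2 * lam) with hTdef
  have hT : 0 < T := by positivity
  set p : ℝ := 2 * ε ^ 2 / (lam * q ^ 2) with hp
  have hp0 : 0 ≤ p := by positivity
  set u : ℝ → ℝ := fun s => (-x₀ + q / 2 * √(1 - 2 * lam * s)) / ε with hu
  set G : Set Ω := dyadicExceed B u T with hG
  set K : Set Ω := {ω | B T ω - B 0 ω ≤ -x₀ / ε} with hK
  have hGK : P.real (G ∩ K) ≤ p * P.real G := by
    have h := hB.measure_dyadicExceed_inter_le (u := u) (v := -x₀ / ε) hT fun s hs =>
      hB.measure_fall_from_curve_le (x₀ := x₀) hlam (half_pos hq) hε hs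
    have hpeq : ε ^ 2 / (2 * lam * (q / 2) ^ 2) = p := by
      rw [hp]; field_simp
    rw [hpeq] at h
    have h' := ENNReal.toReal_mono
      (ENNReal.mul_ne_top ENNReal.ofReal_ne_top (measure_ne_top P _)) h
    rwa [ENNReal.toReal_mul, ENNReal.toReal_ofReal hp0] at h'
  have hmemF : ∀ ω, B 0 ω = 0 → (ω ∈ F ↔ ω ∉ K) := by
    intro ω h0
    rw [hF, hK, Set.mem_ofPred_eq, Set.mem_ofPred_eq, h0, sub_zero, not_le, div_lt_iff₀ hε]
    constructor <;> intro h <;> linarith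
  have hFE : F ≤ᵐ[P] E := by
    filter_upwards [hB.2.1] with ω hω hωF
    rw [hF] at hωF
    rw [hE]
    exact exists_eq_curve_of_pos (b := fun t => B t ω) hlam hx₀ hq hω.1 hω.2 hωF
  have hFK : P.real F = P.real Kᶜ := by
    refine measureReal_congr ?_
    filter_upwards [hB.2.1] with ω hω
    exact propext (hmemF ω hω.1)
  have hFpos : 0 < P.real F := by
    rw [hFK, measureReal_def, ENNReal.toReal_pos_iff]
    refine ⟨?_, measure_lt_top _ _⟩
    convert hB.measure_lt_pos hT (-x₀ / ε) using 2
    ext ω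
    simp only [hK, Set.mem_compl_iff, Set.mem_ofPred_eq, not_le]
  have hΔ : (symmDiff E F : Set Ω) ≤ᵐ[P] (G ∩ K : Set Ω) := by
    filter_upwards [hB.2.1, hFE] with ω hω hωFE hωΔ
    rcases hωΔ with ⟨hωE, hωF⟩ | ⟨hωF, hωE⟩
    · refine ⟨?_, not_not.1 fun h => hωF ((hmemF ω hω.1).2 h)⟩
      rw [hE] at hωE
      obtain ⟨s, hs, h⟩ := hωE
      have hpos : 0 < 1 - 2 * lam * s := by
        have := (lt_div_iff₀ (by positivity)).1 hs.2
        linarith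
      refine mem_dyadicExceed hT (by fun_prop) hω.2 hs ?_
      have hc : 0 < q * √(1 - 2 * lam * s) := by positivity
      rw [hω.1, sub_zero, hu, div_lt_iff₀ hε]
      linarith
    · exact absurd (hωFE hωF) hωE
  have hEF : P.real F ≤ P.real E :=
    ENNReal.toReal_mono (measure_ne_top P _) (measure_mono_ae hFE)
  have hΔle : P.real (symmDiff E F) ≤ P.real (G ∩ K) :=
    ENNReal.toReal_mono (measure_ne_top P _) (measure_mono_ae hΔ)
  have hGle : P.real G ≤ P.real (G ∩ K) + P.real F := by
    rw [hFK]
    refine (measureReal_mono fun ω hω => ?_).trans (measureReal_union_le _ _)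
    by_cases h : ω ∈ K
    · exact Or.inl ⟨hω, h⟩
    · exact Or.inr h
  have hG0 : 0 ≤ P.real G := measureReal_nonneg
  have hG2 : P.real G ≤ 2 * P.real E := by nlinarith
  exact ⟨hFpos.trans_le hEF, by nlinarith⟩

end HittingCurve

/-- Lemma 5: for `λ > 0` and `q₋ < x₀ < 0 < q₊`, the families
`E_ε = {∃ t ≥ 0, X_ε(t) = q₊}` and `F_ε = {x₀ + ε B(1/(2λ)) > 0}` are asymptotically
equivalent as `ε → 0⁺`. -/
theorem hitting_qp_equivalent_to_positive_limit
    {Ω : Type*} [MeasurableSpace Ω] (P : Measure Ω) [IsProbabilityMeasure P]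
    (hPc : P.IsComplete)
    (B : ℝ → Ω → ℝ) (hB : IsBrownianMotion P B)
    (lam qm x₀ qp : ℝ) (hlam : 0 < lam) (hqm : qm < x₀) (hx₀ : x₀ < 0) (hqp : 0 < qp)
    (X : ℝ → ℝ → Ω → ℝ)
    (hX : ∀ ε t ω, X ε t ω
      = Real.exp (lam * t) * (x₀ + ε * B ((1 - Real.exp (-(2 * lam * t))) / (2 * lam)) ω))
    (E F : ℝ → Set Ω)
    (hE : ∀ ε, E ε = {ω | ∃ t : ℝ, 0 ≤ t ∧ X ε t ω = qp})
    (hF : ∀ ε, F ε = {ω | 0 < x₀ + ε * B (1 / (2 * lam)) ω}) :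
    AsympEquivalent P E F := by
  have hEcurve : ∀ ε, E ε = {ω | ∃ s ∈ Ico 0 (1 / (2 * lam)),
      x₀ + ε * B s ω = qp * √(1 - 2 * lam * s)} := by
    intro ε
    rw [hE]
    ext ω
    simp only [Set.mem_ofPred_eq, hX]
    exact exists_exp_mul_eq_iff hlam qp fun s => x₀ + ε * B s ω
  have hrate : Tendsto (fun ε : ℝ => 2 * ε ^ 2 / (lam * qp ^ 2)) (𝓝[>] 0) (𝓝 0) := by
    refine tendsto_nhdsWithin_of_tendsto_nhds ?_
    have : Continuous fun ε : ℝ => 2 * ε ^ 2 / (lam * qp ^ 2) := by fun_prop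
    simpa using this.tendsto 0
  have hbound : ∀ᶠ ε in 𝓝[>] (0 : ℝ), 0 < P.real (E ε) ∧
      P.real (symmDiff (E ε) (F ε)) ≤ 2 * (2 * ε ^ 2 / (lam * qp ^ 2)) * P.real (E ε) := by
    filter_upwards [self_mem_nhdsWithin, hrate.eventually_le_const (u := 1 / 2) (by norm_num)]
      with ε hε hsmall
    exact hB.measureReal_symmDiff_le hlam hx₀ hqp hε hsmall (hEcurve ε) (hF ε)
  refine ⟨hbound.mono fun ε h => (ENNReal.toReal_pos_iff.1 h.1).1, ?_⟩
  refine squeeze_zero' (Eventually.of_forall fun ε => by positivity)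
    (hbound.mono fun ε h => (div_le_iff₀ h.1).2 h.2) ?_
  simpa using hrate.const_mul 2
end

section
/- Let λ > 0 and q₋ < x₀ < 0 < q₊. Define F_ε = {x₀ + ε·B(1/(2λ)) > 0} and, on F_ε, Q_ε = (1/λ)·ln((x₀ + ε·B(1/(2λ)))/(x₀ + ε·B((1 − e^{−2λθ_ε})/(2λ)))), where θ_ε = inf{t ≥ 0 : X_ε(t) = q₊} (which is finite almost surely on F_ε). Then the conditional law Law[Q_ε | F_ε] converges weakly to the Dirac measure at 0 as ε → 0⁺; equivalently, Q_ε converges to 0 in probability with respect to P(·|F_ε). -/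
open MeasureTheory ProbabilityTheory Filter Topology Set

open scoped NNReal ENNReal

namespace IsBrownianMotion

variable {Ω : Type*} [MeasurableSpace Ω] {P : Measure Ω} {B : ℝ → Ω → ℝ}

lemma hasLaw_sub (hB : IsBrownianMotion P B) {s t : ℝ} (hs : 0 ≤ s) (hst : s ≤ t) :
    HasLaw (fun ω => B t ω - B s ω) (gaussianReal 0 (Real.toNNReal (t - s))) P :=
  ⟨((hB.1 t).sub (hB.1 s)).aemeasurable, hB.2.2.1 s t hs hst⟩

lemma hasLaw_eval (hB : IsBrownianMotion P B) {t : ℝ} (ht : 0 ≤ t) :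
    HasLaw (B t) (gaussianReal 0 (Real.toNNReal t)) P := by
  have h := hB.hasLaw_sub le_rfl ht
  rw [sub_zero] at h
  refine h.congr ?_
  filter_upwards [hB.2.1] with ω hω
  simp [hω.1]

lemma isPreBrownianReal (hB : IsBrownianMotion P B) :
    IsPreBrownianReal (fun (t : ℝ≥0) ω => B t ω) P := by
  refine HasIndepIncrements.isPreBrownianReal_of_hasLaw (fun t => ?_)
    (hasIndepIncrements_iff_nat.2 fun t ht => ?_)
  · simpa using hB.hasLaw_eval t.2
  · exact hB.2.2.2 (fun i => (t i : ℝ)) (fun i j hij => by exact_mod_cast ht hij)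
      fun i => (t i).2

/-- The bridge associated with a Brownian motion on `[0, T]` is independent of its endpoint. -/
lemma indepFun_bridge (hB : IsBrownianMotion P B) {T : ℝ} (hT : 0 < T)
    {ι : Type*} (r : ι → ℝ) (hr : ∀ i, r i ∈ Icc (0 : ℝ) 1) :
    IndepFun (fun ω i => B (T * r i) ω - r i * B T ω) (fun ω (_ : Unit) => B T ω) P := by
  have hW := hB.isPreBrownianReal
  have := hW.isGaussianProcess.isProbabilityMeasure
  lift T to ℝ≥0 using hT.le
  have hT0 : T ≠ 0 := by rintro rfl; simp at hT
  choose hr0 hr1 using hr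
  lift r to ι → ℝ≥0 using hr0
  have hcast : ∀ i, (T : ℝ) * (r i : ℝ) = ((T * r i : ℝ≥0) : ℝ) := fun i => by push_cast; rfl
  simp_rw [hcast]
  apply IsGaussianProcess.indepFun_of_covariance_eq_zero
  · apply hW.isGaussianProcess.of_isGaussianProcess
    rintro (i | u)
    · exact ⟨{T * r i, T},
        { toFun x := x ⟨T * r i, by simp⟩ - r i * x ⟨T, by simp⟩
          map_add' x y := by simp; ring
          map_smul' c x := by simp; ring }, by simp⟩
    · exact ⟨{T},
        { toFun x := x ⟨T, by simp⟩
          map_add' x y := by simp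
          map_smul' c x := by simp }, by simp⟩
  · exact fun i => ((hB.1 _).sub ((hB.1 _).const_mul _)).aemeasurable
  · exact fun i => (hB.1 _).aemeasurable
  · intro i u
    have hle : T * r i ≤ T := mul_le_of_le_one_right zero_le (by exact_mod_cast hr1 i)
    have h2 : ∀ t : ℝ≥0, MemLp (B t) 2 P := fun t =>
      (hW.isGaussianProcess.hasGaussianLaw_eval t).memLp_two
    have hcov := hW.covariance_fun_eval
    rw [covariance_fun_sub_left (h2 _) ((h2 _).const_mul _) (h2 _), covariance_const_mul_left]
    have e1 := hcov (T * r i) T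
    have e2 := hcov T T
    rw [min_eq_left hle] at e1
    rw [min_self] at e2
    rw [e1, e2]
    push_cast
    ring

end IsBrownianMotion

/-- Partial sums of independent centered integrable variables form a martingale. -/
lemma martingale_sum_of_iIndepFun {Ω : Type*} [MeasurableSpace Ω] {P : Measure Ω}
    {ξ : ℕ → Ω → ℝ} (hm : ∀ i, StronglyMeasurable (ξ i)) (hind : iIndepFun ξ P)
    (hint : ∀ i, Integrable (ξ i) P) (h0 : ∀ i, P[ξ i] = 0) :
    Martingale (fun n ω => ∑ i ∈ Finset.range (n + 1), ξ i ω) (Filtration.natural ξ hm) P := by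
  have := hind.isProbabilityMeasure
  refine martingale_of_condExp_sub_eq_zero_nat (fun n => ?_)
    (fun n => integrable_finsetSum _ fun i _ => hint i) fun n => ?_
  · refine Finset.stronglyMeasurable_fun_sum _ fun i hi => ?_
    exact ((Filtration.stronglyAdapted_natural hm) i).mono
      ((Filtration.natural ξ hm).mono (by simpa [Nat.lt_succ_iff] using hi))
  · have e : ((fun ω => ∑ i ∈ Finset.range (n + 1 + 1), ξ i ω) -
        fun ω => ∑ i ∈ Finset.range (n + 1), ξ i ω) = ξ (n + 1) := by
      ext ω
      simp [Finset.sum_range_succ]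
    rw [e]
    refine (iIndepFun.condExp_natural_ae_eq_of_lt hm hind (Nat.lt_succ_self n)).trans ?_
    filter_upwards with ω
    simpa using h0 (n + 1)

lemma Submartingale.measure_exists_le {Ω : Type*} [MeasurableSpace Ω] {P : Measure Ω}
    [IsFiniteMeasure P] {𝒢 : Filtration ℕ ‹MeasurableSpace Ω›} {f : ℕ → Ω → ℝ}
    (hf : Submartingale f 𝒢 P) (hnonneg : 0 ≤ f) (n : ℕ) {x : ℝ} (hx : 0 < x) :
    P {ω | ∃ k ≤ n, x ≤ f k ω} ≤ ENNReal.ofReal (P[f n] / x) := by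
  lift x to ℝ≥0 using hx.le
  have h := maximal_ineq hf hnonneg (ε := x) n
  have e : {ω | (x : ℝ) ≤ (Finset.range (n + 1)).sup' Finset.nonempty_range_add_one
      fun k => f k ω} = {ω | ∃ k ≤ n, (x : ℝ) ≤ f k ω} := by
    ext ω
    simp [Finset.le_sup'_iff]
  rw [e] at h
  rw [ENNReal.ofReal_div_of_pos hx, ENNReal.le_div_iff_mul_le
    (Or.inl (ENNReal.ofReal_pos.2 hx).ne') (by simp), mul_comm, ENNReal.ofReal_coe_nnreal]
  refine h.trans (ENNReal.ofReal_le_ofReal ?_)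
  exact setIntegral_le_integral (hf.integrable n) (ae_of_all _ (hnonneg n))

lemma integral_abs_le_sqrt_of_hasLaw_gaussianReal {Ω : Type*} [MeasurableSpace Ω]
    {P : Measure Ω} [IsProbabilityMeasure P] {Y : Ω → ℝ} {v : ℝ≥0}
    (hY : HasLaw Y (gaussianReal 0 v) P) :
    ∫ ω, |Y ω| ∂P ≤ Real.sqrt v := by
  have h2 : MemLp Y 2 P := hY.hasGaussianLaw.memLp_two
  have hv : variance (fun ω => |Y ω|) P = P[(fun ω => |Y ω|) ^ 2] - P[fun ω => |Y ω|] ^ 2 :=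
    variance_eq_sub h2.norm
  have hv' : variance Y P = v := by rw [hY.variance_eq, variance_id_gaussianReal]
  have hv'' : variance Y P = P[Y ^ 2] - P[Y] ^ 2 := variance_eq_sub h2
  have hmean : P[Y] = 0 := by rw [hY.integral_eq, integral_id_gaussianReal]
  have hsq : P[(fun ω => |Y ω|) ^ 2] = P[Y ^ 2] := by
    congr 1; ext ω; simp
  have hnn := variance_nonneg (fun ω => |Y ω|) P
  apply Real.le_sqrt_of_sq_le
  rw [hmean] at hv''
  nlinarith [hv, hv', hv'', hsq, hnn]

namespace IsBrownianMotion

variable {Ω : Type*} [MeasurableSpace Ω] {P : Measure Ω} [IsProbabilityMeasure P]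
  {B : ℝ → Ω → ℝ}

lemma integral_abs_sub_le (hB : IsBrownianMotion P B) {s t : ℝ} (hs : 0 ≤ s) (hst : s ≤ t) :
    ∫ ω, |B t ω - B s ω| ∂P ≤ Real.sqrt (t - s) := by
  have h := integral_abs_le_sqrt_of_hasLaw_gaussianReal (hB.hasLaw_sub hs hst)
  rwa [Real.coe_toNNReal _ (sub_nonneg.2 hst)] at h

/-- Doob's maximal inequality along a monotone sequence of times. -/
lemma measure_exists_le_abs_sub_le (hB : IsBrownianMotion P B) {t : ℕ → ℝ} (ht : Monotone t)
    (ht0 : 0 ≤ t 0) (n : ℕ) {x : ℝ} (hx : 0 < x) :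
    P {ω | ∃ k ≤ n, x ≤ |B (t k) ω - B (t 0) ω|} ≤
      ENNReal.ofReal (Real.sqrt (t n - t 0) / x) := by
  have ht1 : ∀ i, 0 ≤ t i := fun i => ht0.trans (ht (Nat.zero_le i))
  let τ : ℕ → ℝ := fun i => t (i - 1)
  have hτ : Monotone τ := fun i j hij => ht (by omega)
  let ξ : ℕ → Ω → ℝ := fun i ω => B (τ (i + 1)) ω - B (τ i) ω
  have hlaw : ∀ i, HasLaw (ξ i) (gaussianReal 0 (Real.toNNReal (τ (i + 1) - τ i))) P :=
    fun i => hB.hasLaw_sub (ht1 _) (hτ (Nat.le_succ i))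
  have hmart := martingale_sum_of_iIndepFun (P := P) (ξ := ξ)
    (fun i => ((hB.1 _).sub (hB.1 _)).stronglyMeasurable) (hB.2.2.2 τ hτ fun i => ht1 _)
    (fun i => (hlaw i).hasGaussianLaw.integrable)
    (fun i => by rw [(hlaw i).integral_eq, integral_id_gaussianReal])
  have hsum : ∀ n ω, ∑ i ∈ Finset.range (n + 1), ξ i ω = B (t n) ω - B (t 0) ω := by
    intro n ω
    rw [Finset.sum_range_sub (fun i => B (τ i) ω)]
    simp [τ]
  simp only [hsum] at hmart
  have hsub := hmart.submartingale.sup hmart.neg.submartingale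
  have habs : ((fun n ω => B (t n) ω - B (t 0) ω) ⊔ -fun n ω => B (t n) ω - B (t 0) ω)
      = fun n ω => |B (t n) ω - B (t 0) ω| := by
    ext n ω
    simp [abs, neg_sub]
  rw [habs] at hsub
  refine (Submartingale.measure_exists_le hsub (fun n ω => abs_nonneg _) n hx).trans ?_
  gcongr
  exact hB.integral_abs_sub_le ht0 (ht (Nat.zero_le n))

/-- The maximal inequality for the increments of a Brownian motion on `[a, b]`. -/
lemma measure_exists_mem_Icc_lt_abs_sub_le (hB : IsBrownianMotion P B) {a b : ℝ} (ha : 0 ≤ a)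
    (hab : a ≤ b) {x : ℝ} (hx : 0 < x) :
    P {ω | ∃ s ∈ Icc a b, x < |B s ω - B a ω|} ≤ ENNReal.ofReal (Real.sqrt (b - a) / x) := by
  let t : ℕ → ℕ → ℝ := fun n k => a + (b - a) * (k / 2 ^ n)
  have ht : ∀ n, Monotone (t n) := fun n i j hij => by
    have := sub_nonneg.2 hab
    simp only [t]
    gcongr
  let A : ℕ → Set Ω := fun n => {ω | ∃ k ≤ 2 ^ n, x ≤ |B (t n k) ω - B (t n 0) ω|}
  have ht0 : ∀ n, t n 0 = a := fun n => by simp [t]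
  have hA : Monotone A := by
    refine monotone_nat_of_le_succ fun n ω => ?_
    rintro ⟨k, hk, hxk⟩
    refine ⟨2 * k, by rw [pow_succ]; omega, ?_⟩
    have : t (n + 1) (2 * k) = t n k := by
      simp only [t, pow_succ]
      push_cast
      field_simp
    rwa [this, ht0, ← ht0 n]
  have hAn : ∀ n, P (A n) ≤ ENNReal.ofReal (Real.sqrt (b - a) / x) := fun n => by
    have h := hB.measure_exists_le_abs_sub_le (ht n) (by rw [ht0]; exact ha) (2 ^ n) hx
    have e : t n (2 ^ n) - t n 0 = b - a := by
      simp [t]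
    rwa [e] at h
  calc P {ω | ∃ s ∈ Icc a b, x < |B s ω - B a ω|} ≤ P (⋃ n, A n) := by
        apply measure_mono_ae
        filter_upwards [hB.2.1] with ω hω
        rintro ⟨s, hs, hxs⟩
        obtain ⟨r, hr, rfl⟩ : ∃ r ∈ Icc (0 : ℝ) 1, a + (b - a) * r = s := by
          rcases hab.eq_or_lt with rfl | hlt
          · exact ⟨0, by simp, by simp; exact le_antisymm hs.1 hs.2⟩
          · have : 0 < b - a := sub_pos.2 hlt
            refine ⟨(s - a) / (b - a), ⟨div_nonneg (by linarith [hs.1]) this.le,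
              (div_le_one this).2 (by linarith [hs.2])⟩, by field_simp; ring⟩
        have hfl : Tendsto (fun n : ℕ => ((⌊r * 2 ^ n⌋₊ : ℕ) : ℝ) / 2 ^ n) atTop (𝓝 r) :=
          (tendsto_nat_floor_mul_div_atTop hr.1).comp
            (tendsto_pow_atTop_atTop_of_one_lt one_lt_two)
        have htend : Tendsto (fun n : ℕ => t n ⌊r * 2 ^ n⌋₊) atTop
            (𝓝[Ici 0] (a + (b - a) * r)) := by
          refine tendsto_nhdsWithin_iff.2 ⟨(hfl.const_mul _).const_add _, ?_⟩
          exact Eventually.of_forall fun n => by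
            have := sub_nonneg.2 hab
            simp only [t, mem_Ici]
            positivity
        have hcont := (hω.2 _ (ha.trans hs.1 : a + (b - a) * r ∈ Ici 0)).tendsto.comp htend
        have hev := (hcont.sub_const (B a ω)).abs.eventually_const_lt hxs
        obtain ⟨n, hn⟩ := hev.exists
        refine mem_iUnion.2 ⟨n, ⌊r * 2 ^ n⌋₊, ?_, ?_⟩
        · apply Nat.floor_le_of_le
          push_cast
          have : (0 : ℝ) < 2 ^ n := by positivity
          nlinarith [hr.2]
        · rw [ht0]
          exact hn.le
    _ = ⨆ n, P (A n) := hA.measure_iUnion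
    _ ≤ _ := iSup_le hAn

end IsBrownianMotion

namespace IsBrownianMotion

variable {Ω : Type*} [MeasurableSpace Ω] {P : Measure Ω} [IsProbabilityMeasure P]
  {B : ℝ → Ω → ℝ}

/-- Near the endpoint `T`, the bridge at time `T (1 - v ^ 6)` is of order `v ^ 2`, with a weak-type
bound on the constant. -/
lemma measure_bridge_le (hB : IsBrownianMotion P B) {T : ℝ} (hT : 0 < T) {M : ℝ} (hM : 0 < M) :
    P {ω | ∃ v ∈ Ioc (0 : ℝ) 1, M * v ^ 2 < |B (T * (1 - v ^ 6)) ω - (1 - v ^ 6) * B T ω|} ≤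
      ENNReal.ofReal (34 * Real.sqrt T / M) := by
  let r : ℕ → ℝ := fun n => (1 / 2) ^ n
  have hr0 : ∀ n, 0 < r n := fun n => by positivity
  have hr1 : ∀ n, r n ≤ 1 := fun n => pow_le_one₀ (by norm_num) (by norm_num)
  let a : ℕ → ℝ := fun n => T * (1 - r n ^ 6)
  have ha0 : ∀ n, 0 ≤ a n := fun n =>
    mul_nonneg hT.le (sub_nonneg.2 (pow_le_one₀ (hr0 n).le (hr1 n)))
  have haT : ∀ n, a n ≤ T := fun n =>
    mul_le_of_le_one_right hT.le (by linarith [pow_pos (hr0 n) 6])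
  let A : ℕ → Set Ω := fun n => {ω | ∃ s ∈ Icc (a n) T, M * r n ^ 2 / 16 < |B s ω - B (a n) ω|}
  have hA : ∀ n, P (A n) ≤ ENNReal.ofReal (16 * Real.sqrt T / M * r n) := fun n => by
    refine (hB.measure_exists_mem_Icc_lt_abs_sub_le (ha0 n) (haT n)
      (by have := hr0 n; positivity)).trans (le_of_eq ?_)
    congr 1
    have e : T - a n = T * (r n ^ 3) ^ 2 := by simp only [a]; ring
    have := hr0 n
    rw [e, Real.sqrt_mul hT.le, Real.sqrt_sq (by positivity)]
    field_simp
  let A' : Set Ω := {ω | ∃ s ∈ Icc 0 T, M / 2 < |B s ω - B 0 ω|}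
  have hA' : P A' ≤ ENNReal.ofReal (2 * Real.sqrt T / M) := by
    refine (hB.measure_exists_mem_Icc_lt_abs_sub_le le_rfl hT.le
      (half_pos hM)).trans (le_of_eq ?_)
    rw [sub_zero]
    congr 1
    field_simp
  have hsum : HasSum r 2 := hasSum_geometric_two
  calc _ ≤ P (A' ∪ ⋃ n, A n) := by
        apply measure_mono_ae
        filter_upwards [hB.2.1] with ω hω
        rintro ⟨v, hv, hlt⟩
        by_contra hnot
        change ω ∉ A' ∪ ⋃ n, A n at hnot
        simp only [mem_union, mem_iUnion, not_or, not_exists] at hnot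
        have hBT : |B T ω| ≤ M / 2 := by
          by_contra hc
          exact hnot.1 ⟨T, ⟨hT.le, le_rfl⟩, by simpa [hω.1] using hc⟩
        obtain ⟨n, hn1, hn2⟩ := exists_nat_pow_near_of_lt_one hv.1 hv.2
          (by norm_num : (0 : ℝ) < 1 / 2) (by norm_num : (1 / 2 : ℝ) < 1)
        have hinc : ∀ s ∈ Icc (a n) T, |B s ω - B (a n) ω| ≤ M * r n ^ 2 / 16 := fun s hs => by
          by_contra hc
          exact hnot.2 n ⟨s, hs, not_le.1 hc⟩
        have hrv : r n / 2 < v := by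
          have : r n / 2 = (1 / 2) ^ (n + 1) := by simp only [r]; ring
          rw [this]; exact hn1
        have hv6 : v ^ 6 ≤ r n ^ 6 := pow_le_pow_left₀ hv.1.le hn2 6
        have h1 := hinc (T * (1 - v ^ 6))
          ⟨mul_le_mul_of_nonneg_left (by linarith) hT.le,
            mul_le_of_le_one_right hT.le (by linarith [pow_pos hv.1 6])⟩
        have h2 := hinc T ⟨haT n, le_rfl⟩
        have h3 : v ^ 6 * |B T ω| ≤ v ^ 2 * (M / 2) :=
          mul_le_mul (pow_le_pow_of_le_one hv.1.le hv.2 (by norm_num)) hBT (abs_nonneg _)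
            (by positivity)
        have h4 : |B (T * (1 - v ^ 6)) ω - (1 - v ^ 6) * B T ω| ≤
            |B (T * (1 - v ^ 6)) ω - B (a n) ω| + |B T ω - B (a n) ω| + v ^ 6 * |B T ω| := by
          have e : v ^ 6 * |B T ω| = |v ^ 6 * B T ω| := by
            rw [abs_mul, abs_of_pos (pow_pos hv.1 6)]
          rw [e, show B (T * (1 - v ^ 6)) ω - (1 - v ^ 6) * B T ω
            = (B (T * (1 - v ^ 6)) ω - B (a n) ω) - (B T ω - B (a n) ω) + v ^ 6 * B T ω by ring]
          exact (abs_add_le _ _).trans (by gcongr; exact abs_sub _ _)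
        have h5 : r n ^ 2 ≤ 4 * v ^ 2 := by nlinarith [hr0 n]
        nlinarith
    _ ≤ P A' + ∑' n, P (A n) :=
        (measure_union_le _ _).trans (by gcongr; exact measure_iUnion_le _)
    _ ≤ ENNReal.ofReal (2 * Real.sqrt T / M) +
          ∑' n, ENNReal.ofReal (16 * Real.sqrt T / M * r n) := by
        gcongr with n
        exact hA n
    _ = _ := by
        rw [← ENNReal.ofReal_tsum_of_nonneg (fun n => by have := hr0 n; positivity)
          (hsum.summable.mul_left _), tsum_mul_left, hsum.tsum_eq,
          ← ENNReal.ofReal_add (by positivity) (by positivity)]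
        congr 1
        ring

/-- Conditioning on the endpoint does not change the bound on the bridge. -/
lemma measure_inter_bridge_le (hB : IsBrownianMotion P B) {T : ℝ} (hT : 0 < T) {M : ℝ}
    (hM : 0 < M) {S : Set ℝ} (hS : MeasurableSet S) :
    P (B T ⁻¹' S ∩ {ω | ∃ v ∈ Ioc (0 : ℝ) 1,
        M * v ^ 2 < |B (T * (1 - v ^ 6)) ω - (1 - v ^ 6) * B T ω|}) ≤
      ENNReal.ofReal (34 * Real.sqrt T / M) * P (B T ⁻¹' S) := by
  let ι := {q : ℚ // (q : ℝ) ∈ Ioc (0 : ℝ) 1}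
  let w : ι → ℝ := fun i => ((i : ℚ) : ℝ)
  have hind := hB.indepFun_bridge hT (fun i : ι => 1 - w i ^ 6) fun i =>
    ⟨sub_nonneg.2 (pow_le_one₀ i.2.1.le i.2.2), by linarith [pow_pos i.2.1 6]⟩
  let G : Set (ι → ℝ) := ⋃ i, {x | M * w i ^ 2 < |x i|}
  have hG : MeasurableSet G := MeasurableSet.iUnion fun i =>
    measurableSet_lt measurable_const (measurable_pi_apply i).abs
  have hS' : MeasurableSet {x : Unit → ℝ | x () ∈ S} := measurable_pi_apply () hS
  have hmul := hind.measure_inter_preimage_eq_mul _ _ hG hS'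
  calc _ ≤ P ((fun ω i => B (T * (1 - w i ^ 6)) ω - (1 - w i ^ 6) * B T ω) ⁻¹' G ∩
          (fun ω (_ : Unit) => B T ω) ⁻¹' {x : Unit → ℝ | x () ∈ S}) := by
        apply measure_mono_ae
        filter_upwards [hB.2.1] with ω hω
        rintro ⟨hωS, v, hv, hlt⟩
        refine ⟨?_, hωS⟩
        have hcont : ContinuousOn (fun v : ℝ => |B (T * (1 - v ^ 6)) ω - (1 - v ^ 6) * B T ω|
            - M * v ^ 2) (Icc 0 1) := by
          have : ContinuousOn (fun v : ℝ => B (T * (1 - v ^ 6)) ω) (Icc 0 1) :=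
            hω.2.comp (f := fun v : ℝ => T * (1 - v ^ 6)) (by fun_prop) fun v hv =>
              mul_nonneg hT.le (sub_nonneg.2 (pow_le_one₀ hv.1 hv.2))
          exact (this.sub (by fun_prop)).abs.sub (by fun_prop)
        have hev := (hcont v ⟨hv.1.le, hv.2⟩).eventually_const_lt (sub_pos.2 hlt)
        obtain ⟨δ, hδ, hball⟩ := Metric.mem_nhdsWithin_iff.1 hev
        obtain ⟨q, hq1, hq2⟩ := exists_rat_btwn (max_lt hv.1 (sub_lt_self v hδ))
        have hq0 := (max_lt_iff.1 hq1).1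
        have hqv := (max_lt_iff.1 hq1).2
        have hmem : 0 < |B (T * (1 - (q : ℝ) ^ 6)) ω - (1 - (q : ℝ) ^ 6) * B T ω|
            - M * (q : ℝ) ^ 2 := hball ⟨by
          rw [Metric.mem_ball, Real.dist_eq, abs_lt]; constructor <;> linarith,
          ⟨hq0.le, hq2.le.trans hv.2⟩⟩
        exact mem_iUnion.2 ⟨⟨q, hq0, hq2.le.trans hv.2⟩, by simpa [w] using hmem⟩
    _ ≤ _ := by
        rw [hmul]
        refine mul_le_mul' ((measure_mono ?_).trans (hB.measure_bridge_le hT hM)) le_rfl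
        intro ω hω
        obtain ⟨i, hi⟩ := mem_iUnion.1 hω
        exact ⟨w i, i.2, hi⟩

end IsBrownianMotion

lemma gaussianReal_Ioi_add_le {v : ℝ≥0} (hv : v ≠ 0) {y h : ℝ} (hh : 0 ≤ h) :
    gaussianReal 0 v (Ioi (y + h)) ≤
      ENNReal.ofReal (Real.exp (-(y * h / v))) * gaussianReal 0 v (Ioi y) := by
  have hv' : (0 : ℝ) < v := by positivity
  have e : gaussianReal 0 v (Ioi (y + h)) = gaussianReal (-h) v (Ioi y) := by
    have hm := gaussianReal_map_sub_const (μ := 0) (v := v) h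
    rw [zero_sub] at hm
    rw [← hm, Measure.map_apply (by fun_prop) measurableSet_Ioi]
    congr 1
    ext x
    simp
  rw [e, gaussianReal_apply _ hv, gaussianReal_apply _ hv,
    ← lintegral_const_mul _ (measurable_gaussianPDF 0 v)]
  refine setLIntegral_mono ((measurable_gaussianPDF 0 v).const_mul _) fun x hx => ?_
  rw [gaussianPDF, gaussianPDF, ← ENNReal.ofReal_mul (Real.exp_nonneg _)]
  apply ENNReal.ofReal_le_ofReal
  rw [gaussianPDFReal, gaussianPDFReal, mul_left_comm, ← Real.exp_add]
  gcongr
  have hx' : y ≤ x := le_of_lt hx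
  rw [← sub_nonneg]
  have : -(y * h / v) + -(x - 0) ^ 2 / (2 * v) - -(x - -h) ^ 2 / (2 * v)
      = (2 * (x - y) * h + h ^ 2) / (2 * v) := by
    field_simp
    ring
  rw [this]
  have := mul_nonneg (sub_nonneg.2 hx') hh
  positivity

lemma gaussianPDFReal_zero_antitoneOn (v : ℝ≥0) : AntitoneOn (gaussianPDFReal 0 v) (Ici 0) := by
  intro x hx y _ hxy
  rw [gaussianPDFReal, gaussianPDFReal, sub_zero, sub_zero]
  have : (0 : ℝ) ≤ x := hx
  gcongr

lemma gaussianReal_Ioc_add_le {v : ℝ≥0} (hv : v ≠ 0) {y h : ℝ} (hy : 0 ≤ y) :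
    gaussianReal 0 v (Ioc y (y + h)) ≤ ENNReal.ofReal (gaussianPDFReal 0 v y * h) := by
  rw [gaussianReal_apply _ hv]
  calc _ ≤ ∫⁻ x in Ioc y (y + h), ENNReal.ofReal (gaussianPDFReal 0 v y) :=
        setLIntegral_mono measurable_const fun x hx => ENNReal.ofReal_le_ofReal
          (gaussianPDFReal_zero_antitoneOn v hy (hy.trans hx.1.le) hx.1.le)
    _ = _ := by
        rw [setLIntegral_const, Real.volume_Ioc, add_sub_cancel_left,
          ENNReal.ofReal_mul (gaussianPDFReal_nonneg _ _ _)]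

lemma le_gaussianReal_Ioi {v : ℝ≥0} (hv : v ≠ 0) {y h : ℝ} (hy : 0 ≤ y) (hh : 0 ≤ h) :
    ENNReal.ofReal (gaussianPDFReal 0 v (y + h) * h) ≤ gaussianReal 0 v (Ioi y) := by
  refine le_trans ?_ (measure_mono (Ioc_subset_Ioi_self : Ioc y (y + h) ⊆ Ioi y))
  rw [gaussianReal_apply _ hv]
  calc _ = ∫⁻ x in Ioc y (y + h), ENNReal.ofReal (gaussianPDFReal 0 v (y + h)) := by
        rw [setLIntegral_const, Real.volume_Ioc, add_sub_cancel_left,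
          ENNReal.ofReal_mul (gaussianPDFReal_nonneg _ _ _)]
    _ ≤ _ := setLIntegral_mono (measurable_gaussianPDF 0 v) fun x hx =>
        ENNReal.ofReal_le_ofReal (gaussianPDFReal_zero_antitoneOn v (hy.trans hx.1.le)
          (add_nonneg hy hh) hx.2)

/-- Given that a centered Gaussian variable exceeds `a / ε`, its overshoot is unlikely to be much
larger than `ε`. -/
lemma exists_gaussianReal_overshoot_le {v : ℝ≥0} (hv : v ≠ 0) {a κ : ℝ} (ha : 0 < a)
    (hκ : 0 < κ) : ∃ C > 0, ∀ ε > 0,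
      gaussianReal 0 v (Ioi (a / ε + C * ε)) ≤
        ENNReal.ofReal κ * gaussianReal 0 v (Ioi (a / ε)) := by
  have hv' : (0 : ℝ) < v := by positivity
  have ht : Tendsto (fun C : ℝ => Real.exp (-(a * C / v))) atTop (𝓝 0) := by
    refine Real.tendsto_exp_neg_atTop_nhds_zero.comp ?_
    exact (tendsto_id.const_mul_atTop ha).atTop_div_const hv'
  obtain ⟨C, hC, hC0⟩ := ((ht.eventually_le_const hκ).and (eventually_gt_atTop 0)).exists
  refine ⟨C, hC0, fun ε hε => (gaussianReal_Ioi_add_le hv (by positivity)).trans ?_⟩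
  gcongr
  rwa [show a / ε * (C * ε) = a * C by field_simp]

/-- Given that a centered Gaussian variable exceeds `a / ε`, its overshoot is unlikely to be much
smaller than `ε`. -/
lemma exists_gaussianReal_small_overshoot_le {v : ℝ≥0} (hv : v ≠ 0) {a κ : ℝ} (ha : 0 < a)
    (hκ : 0 < κ) : ∃ c > 0, ∀ ε > 0, ε ≤ 1 →
      gaussianReal 0 v (Ioc (a / ε) (a / ε + c * ε)) ≤
        ENNReal.ofReal κ * gaussianReal 0 v (Ioi (a / ε)) := by
  have hv' : (0 : ℝ) < v := by positivity
  refine ⟨κ * Real.exp (-((2 * a + 1) / (2 * v))), by positivity, fun ε hε hε1 => ?_⟩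
  have hy : 0 ≤ a / ε := by positivity
  refine (gaussianReal_Ioc_add_le hv hy).trans ?_
  refine le_trans ?_ (mul_le_mul' le_rfl (le_gaussianReal_Ioi hv hy hε.le))
  rw [← ENNReal.ofReal_mul hκ.le]
  apply ENNReal.ofReal_le_ofReal
  have key : gaussianPDFReal 0 v (a / ε) * Real.exp (-((2 * a + 1) / (2 * v)))
      ≤ gaussianPDFReal 0 v (a / ε + ε) := by
    rw [gaussianPDFReal, gaussianPDFReal, mul_assoc, ← Real.exp_add]
    gcongr
    rw [← sub_nonneg]
    have : -(a / ε + ε - 0) ^ 2 / (2 * v) - (-(a / ε - 0) ^ 2 / (2 * v) + -((2 * a + 1) / (2 * v)))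
        = (1 - ε ^ 2) / (2 * v) := by
      field_simp
      ring
    rw [this]
    have : ε ^ 2 ≤ 1 := pow_le_one₀ hε.le hε1
    exact div_nonneg (by linarith) (by positivity)
  calc _ = gaussianPDFReal 0 v (a / ε) * Real.exp (-((2 * a + 1) / (2 * v))) * (κ * ε) := by ring
    _ ≤ gaussianPDFReal 0 v (a / ε + ε) * (κ * ε) := by gcongr
    _ = _ := by ring

/-- Any solution `v` of the crossing equation of the perturbed line is asymptotically determined
by the endpoint `N`. -/
lemma exists_abs_crossing_ratio_sub_one_lt {q x₀ c C M ρ : ℝ} (hq : 0 < q) (hx₀ : x₀ < 0)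
    (hc : 0 < c) (hC : 0 < C) (hM : 0 < M) (hρ : 0 < ρ) :
    ∃ η₀ > 0, ∀ η > 0, η < η₀ → ∀ N v b : ℝ, c * η ^ 6 ≤ N → N ≤ C * η ^ 6 → 0 < v → v ≤ 1 →
      |b| ≤ M * v ^ 2 → q * v ^ 3 = x₀ * v ^ 6 + (1 - v ^ 6) * N + η ^ 3 * b →
      |q * v ^ 3 / N - 1| < ρ := by
  let W : ℝ := max 1 ((C + M) / q)
  have hW1 : 1 ≤ W := le_max_left _ _
  have hW0 : 0 < W := by linarith
  let K : ℝ := |x₀| * W ^ 6 + W ^ 6 * C + M * W ^ 2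
  have hK : 0 < K := by positivity
  refine ⟨min 1 (ρ * c / K), by positivity, ?_⟩
  intro η hη hη0 N v b hN1 hN2 hv0 hv1 hb heq
  have hη1 : η ≤ 1 := hη0.le.trans (min_le_left _ _)
  have hηK : η * K < ρ * c := (lt_div_iff₀ hK).1 (hη0.trans_le (min_le_right _ _))
  have hN0 : 0 < N := lt_of_lt_of_le (by positivity) hN1
  obtain ⟨w, hw0, rfl⟩ : ∃ w, 0 < w ∧ v = η ^ 2 * w :=
    ⟨v / η ^ 2, by positivity, by field_simp⟩
  have hb2 : η ^ 3 * |b| ≤ M * w ^ 2 * η ^ 7 := by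
    calc η ^ 3 * |b| ≤ η ^ 3 * (M * (η ^ 2 * w) ^ 2) := by gcongr
      _ = _ := by ring
  have habs : |η ^ 3 * b| = η ^ 3 * |b| := by rw [abs_mul, abs_of_pos (by positivity)]
  have hwW : w ≤ W := by
    by_contra! hlt
    have hw1 : 1 < w := hW1.trans_lt hlt
    have hle : q * (η ^ 2 * w) ^ 3 ≤ N + M * w ^ 2 * η ^ 7 := by
      have h1 := (le_abs_self (η ^ 3 * b)).trans (habs.le.trans hb2)
      have h2 : 0 < (η ^ 2 * w) ^ 6 := by positivity
      nlinarith [mul_pos h2 hN0, mul_neg_of_neg_of_pos hx₀ h2]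
    have h3 : q * w ^ 3 * η ^ 6 ≤ (C + M) * w ^ 2 * η ^ 6 := by
      calc q * w ^ 3 * η ^ 6 = q * (η ^ 2 * w) ^ 3 := by ring
        _ ≤ N + M * w ^ 2 * η ^ 7 := hle
        _ ≤ C * η ^ 6 * w ^ 2 + M * w ^ 2 * η ^ 6 := by
            gcongr ?_ + _ * ?_
            · exact hN2.trans (le_mul_of_one_le_right (by positivity) (one_le_pow₀ hw1.le))
            · exact pow_le_pow_of_le_one hη.le hη1 (by norm_num)
        _ = _ := by ring
    have h4 := le_of_mul_le_mul_right h3 (by positivity)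
    have h5 : q * w ≤ C + M := le_of_mul_le_mul_right (by linarith : q * w * w ^ 2 ≤ _)
      (by positivity)
    exact absurd ((le_div_iff₀' hq).2 h5 |>.trans (le_max_right 1 _)) (not_le.2 hlt)
  have hdiff : |q * (η ^ 2 * w) ^ 3 - N| ≤ K * η ^ 7 := by
    have e : q * (η ^ 2 * w) ^ 3 - N
        = x₀ * (η ^ 2 * w) ^ 6 - (η ^ 2 * w) ^ 6 * N + η ^ 3 * b := by rw [heq]; ring
    rw [e]
    calc _ ≤ |x₀ * (η ^ 2 * w) ^ 6| + |(η ^ 2 * w) ^ 6 * N| + |η ^ 3 * b| :=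
          (abs_add_le _ _).trans (by gcongr; exact abs_sub _ _)
      _ ≤ |x₀| * W ^ 6 * η ^ 7 + W ^ 6 * C * η ^ 7 + M * W ^ 2 * η ^ 7 := by
          have h6 : (η ^ 2 * w) ^ 6 ≤ W ^ 6 * η ^ 7 := by
            calc (η ^ 2 * w) ^ 6 = w ^ 6 * η ^ 12 := by ring
              _ ≤ W ^ 6 * η ^ 7 := by
                gcongr ?_ ^ 6 * ?_
                exact pow_le_pow_of_le_one hη.le hη1 (by norm_num)
          gcongr ?_ + ?_ + ?_
          · rw [abs_mul, abs_of_pos (by positivity : 0 < (η ^ 2 * w) ^ 6), mul_assoc]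
            gcongr
          · rw [abs_of_pos (by positivity)]
            calc _ ≤ W ^ 6 * η ^ 7 * C := by
                  gcongr
                  exact hN2.trans (mul_le_of_le_one_right hC.le (pow_le_one₀ hη.le hη1))
              _ = _ := by ring
          · rw [habs]
            exact hb2.trans (by gcongr)
      _ = K * η ^ 7 := by simp only [K]; ring
  rw [div_sub_one hN0.ne', abs_div, abs_of_pos hN0, div_lt_iff₀ hN0]
  calc _ ≤ K * η ^ 7 := hdiff
    _ = (η * K) * η ^ 6 := by ring
    _ < ρ * c * η ^ 6 := by gcongr
    _ = ρ * (c * η ^ 6) := by ring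
    _ ≤ ρ * N := by gcongr

/-- A path whose rescaled endpoint is positive reaches the level `q`, and does so at the infimum of
its hitting times. -/
lemma sInf_hitting_mem {f : ℝ → ℝ} (hf : ContinuousOn f (Ici 0)) (hf0 : f 0 = 0)
    {lam x₀ q ε : ℝ} (hlam : 0 < lam) (hx₀ : x₀ < 0) (hq : 0 < q)
    (hN : 0 < x₀ + ε * f (1 / (2 * lam))) :
    sInf {t | 0 ≤ t ∧ Real.exp (lam * t) *
      (x₀ + ε * f ((1 - Real.exp (-(2 * lam * t))) / (2 * lam))) = q} ∈
      {t | 0 ≤ t ∧ Real.exp (lam * t) *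
        (x₀ + ε * f ((1 - Real.exp (-(2 * lam * t))) / (2 * lam))) = q} := by
  set g : ℝ → ℝ := fun t => Real.exp (lam * t) *
    (x₀ + ε * f ((1 - Real.exp (-(2 * lam * t))) / (2 * lam))) with hg
  have htime : ∀ t ∈ Ici (0 : ℝ), (1 - Real.exp (-(2 * lam * t))) / (2 * lam) ∈ Ici (0 : ℝ) :=
    fun t ht => by
      have : (0 : ℝ) ≤ t := ht
      exact div_nonneg (sub_nonneg.2 (Real.exp_le_one_iff.2 (by
        have : 0 ≤ 2 * lam * t := by positivity
        linarith))) (by positivity)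
  have hgc : ContinuousOn g (Ici 0) := by
    have hcomp : ContinuousOn (fun t => f ((1 - Real.exp (-(2 * lam * t))) / (2 * lam))) (Ici 0) :=
      hf.comp (f := fun t : ℝ => (1 - Real.exp (-(2 * lam * t))) / (2 * lam)) (by fun_prop) htime
    exact ContinuousOn.mul (by fun_prop) (continuousOn_const.add (continuousOn_const.mul hcomp))
  have hg0 : g 0 = x₀ := by simp [hg, hf0]
  have hgtop : Tendsto g atTop atTop := by
    have h1 : Tendsto (fun t : ℝ => Real.exp (-(2 * lam * t))) atTop (𝓝 0) :=
      Real.tendsto_exp_neg_atTop_nhds_zero.comp (tendsto_id.const_mul_atTop (by positivity))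
    have h2 : Tendsto (fun t : ℝ => (1 - Real.exp (-(2 * lam * t))) / (2 * lam)) atTop
        (𝓝[Ici 0] (1 / (2 * lam))) := by
      refine tendsto_nhdsWithin_iff.2 ⟨?_, (eventually_ge_atTop 0).mono htime⟩
      simpa using (h1.const_sub 1).div_const (2 * lam)
    have h3 := (hf (1 / (2 * lam)) (by simp only [mem_Ici]; positivity)).tendsto.comp h2
    exact Tendsto.atTop_mul_pos hN
      (Real.tendsto_exp_atTop.comp (tendsto_id.const_mul_atTop hlam))
      ((h3.const_mul ε).const_add x₀)
  obtain ⟨t, ht0, htq⟩ := ((eventually_ge_atTop 0).and (hgtop.eventually_ge_atTop q)).exists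
  obtain ⟨s, hs, hsq⟩ := intermediate_value_Icc ht0 (hgc.mono Icc_subset_Ici_self)
    (⟨by linarith, htq⟩ : q ∈ Icc (g 0) (g t))
  exact IsClosed.csInf_mem (hgc.preimage_isClosed_of_isClosed isClosed_Ici isClosed_singleton)
    ⟨s, hs.1, hsq⟩ ⟨0, fun t ht => ht.1⟩

/-- Lemma 8: with `F_ε = {x₀ + ε B(1/(2λ)) > 0}`, `θ_ε = inf{t ≥ 0 : X_ε(t) = q₊}` and
`Q_ε = (1/λ) ln((x₀ + ε B(1/(2λ)))/(x₀ + ε B((1 - e^{-2λθ_ε})/(2λ))))`, the conditional law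
`Law[Q_ε | F_ε]` converges weakly to `δ₀` as `ε → 0⁺`; equivalently, `Q_ε → 0` in
probability with respect to `P(·|F_ε)`. -/
theorem Q_eps_tendsto_zero_in_conditional_probability
    {Ω : Type*} [MeasurableSpace Ω] (P : Measure Ω) [IsProbabilityMeasure P]
    (hPc : P.IsComplete)
    (B : ℝ → Ω → ℝ) (hB : IsBrownianMotion P B)
    (lam qm x₀ qp : ℝ) (hlam : 0 < lam) (hqm : qm < x₀) (hx₀ : x₀ < 0) (hqp : 0 < qp)
    (X : ℝ → ℝ → Ω → ℝ)
    (hX : ∀ ε t ω, X ε t ω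
      = Real.exp (lam * t) * (x₀ + ε * B ((1 - Real.exp (-(2 * lam * t))) / (2 * lam)) ω))
    (θ : ℝ → Ω → ℝ)
    (hθ : ∀ ε ω, θ ε ω = sInf {t | 0 ≤ t ∧ X ε t ω = qp})
    (F : ℝ → Set Ω)
    (hF : ∀ ε, F ε = {ω | 0 < x₀ + ε * B (1 / (2 * lam)) ω})
    (Q : ℝ → Ω → ℝ)
    (hQ : ∀ ε ω, Q ε ω = (1 / lam) * Real.log ((x₀ + ε * B (1 / (2 * lam)) ω)
      / (x₀ + ε * B ((1 - Real.exp (-(2 * lam * θ ε ω))) / (2 * lam)) ω))) :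
    ∀ δ : ℝ, 0 < δ →
      Tendsto (fun ε : ℝ => ((P[|F ε]) {ω | δ ≤ |Q ε ω|}).toReal) (𝓝[>] 0) (𝓝 0) := by
  intro δ hδ
  set T : ℝ := 1 / (2 * lam) with hTdef
  have hT : 0 < T := by positivity
  have hTv : Real.toNNReal T ≠ 0 := (Real.toNNReal_pos.2 hT).ne'
  have hlaw := hB.hasLaw_eval hT.le
  have hPpre : ∀ S, MeasurableSet S → P (B T ⁻¹' S) = gaussianReal 0 (Real.toNNReal T) S :=
    fun S hS => by rw [← hlaw.map_eq, Measure.map_apply (hB.1 T) hS]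
  have ha : 0 < -x₀ := neg_pos.2 hx₀
  refine (ENNReal.tendsto_toReal ENNReal.zero_ne_top).comp (ENNReal.tendsto_nhds_zero.2 ?_)
  intro κ' hκ'
  obtain ⟨κ, -, hκ0, hκlt⟩ := ENNReal.lt_iff_exists_real_btwn.1 hκ'
  replace hκ0 : 0 < κ := ENNReal.ofReal_pos.1 hκ0
  obtain ⟨C, hC, hCle⟩ := exists_gaussianReal_overshoot_le hTv ha
    (by positivity : 0 < κ / 3)
  obtain ⟨c, hc, hcle⟩ := exists_gaussianReal_small_overshoot_le hTv ha
    (by positivity : 0 < κ / 3)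
  obtain ⟨M, hM, hMle⟩ : ∃ M > 0, 34 * Real.sqrt T / M ≤ κ / 3 := by
    have hs : 0 < Real.sqrt T := Real.sqrt_pos.2 hT
    exact ⟨34 * Real.sqrt T / (κ / 3), by positivity, le_of_eq (by field_simp)⟩
  obtain ⟨ρ, hρ, hlog⟩ : ∃ ρ > 0, ∀ y : ℝ, |y - 1| < ρ → |Real.log y| < lam * δ := by
    have h := Metric.continuousAt_iff.1 (Real.continuousAt_log one_ne_zero) (lam * δ)
      (by positivity)
    simpa [Real.dist_eq] using h
  obtain ⟨η₀, hη₀, hcross⟩ := exists_abs_crossing_ratio_sub_one_lt hqp hx₀ hc hC hM hρ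
  have hev : ∀ᶠ ε : ℝ in 𝓝[>] 0, 0 < ε ∧ ε < min 1 (η₀ ^ 3) :=
    Ioo_mem_nhdsGT (by positivity)
  filter_upwards [hev] with ε hε
  obtain ⟨hε0, hεlt⟩ := hε
  have hε1 : ε < 1 := hεlt.trans_le (min_le_left _ _)
  obtain ⟨η, hη, hηε⟩ : ∃ η > 0, η ^ 3 = ε :=
    ⟨ε ^ (1 / 3 : ℝ), by positivity, by rw [← Real.rpow_natCast, ← Real.rpow_mul hε0.le]; simp⟩
  have hηlt : η < η₀ := lt_of_pow_lt_pow_left₀ 3 hη₀.le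
    (hηε ▸ hεlt.trans_le (min_le_right _ _))
  have hFpre : F ε = B T ⁻¹' Ioi (-x₀ / ε) := by
    rw [hF]
    ext ω
    simp only [mem_ofPred_eq, mem_preimage, mem_Ioi, div_lt_iff₀' hε0]
    exact neg_lt_iff_pos_add'.symm
  have hFm : MeasurableSet (F ε) := hFpre ▸ hB.1 T measurableSet_Ioi
  have hPF : P (F ε) = gaussianReal 0 (Real.toNNReal T) (Ioi (-x₀ / ε)) := by
    rw [hFpre, hPpre _ measurableSet_Ioi]
  have hmain : P (F ε ∩ {ω | δ ≤ |Q ε ω|}) ≤ ENNReal.ofReal κ * P (F ε) := by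
    calc P (F ε ∩ {ω | δ ≤ |Q ε ω|})
        ≤ P (B T ⁻¹' Ioi (-x₀ / ε + C * ε) ∪ B T ⁻¹' Ioc (-x₀ / ε) (-x₀ / ε + c * ε) ∪
            (B T ⁻¹' Ioi (-x₀ / ε) ∩ {ω | ∃ v ∈ Ioc (0 : ℝ) 1,
              M * v ^ 2 < |B (T * (1 - v ^ 6)) ω - (1 - v ^ 6) * B T ω|})) := by
          apply measure_mono_ae
          filter_upwards [hB.2.1] with ω hω
          rintro ⟨hωF, hωQ⟩
          have hy : -x₀ / ε < B T ω := by
            rw [hFpre] at hωF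
            exact hωF
          have hN : 0 < x₀ + ε * B T ω := by
            rw [hF] at hωF
            exact hωF
          by_contra hnot
          change ω ∉ (_ ∪ _ ∪ _ : Set Ω) at hnot
          simp only [mem_union, mem_preimage, mem_Ioi, mem_Ioc, mem_inter_iff, mem_ofPred_eq,
            not_or, not_and, not_lt, not_le, not_exists] at hnot
          obtain ⟨⟨hup, hlow⟩, hbr⟩ := hnot
          replace hlow := hlow hy
          replace hbr := hbr hy
          have hy' : ε * (-x₀ / ε) = -x₀ := by field_simp
          have hNle : x₀ + ε * B T ω ≤ C * η ^ 6 := by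
            have := mul_le_mul_of_nonneg_left hup hε0.le
            rw [show η ^ 6 = ε ^ 2 by rw [← hηε]; ring]
            linarith
          have hNge : c * η ^ 6 ≤ x₀ + ε * B T ω := by
            have := mul_le_mul_of_nonneg_left hlow.le hε0.le
            rw [show η ^ 6 = ε ^ 2 by rw [← hηε]; ring]
            linarith
          have hθmem := sInf_hitting_mem hω.2 hω.1 hlam hx₀ hqp hN
          have hθe : θ ε ω = sInf {t | 0 ≤ t ∧ Real.exp (lam * t) *
              (x₀ + ε * B ((1 - Real.exp (-(2 * lam * t))) / (2 * lam)) ω) = qp} := by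
            rw [hθ]
            simp_rw [hX]
          rw [← hθe] at hθmem
          obtain ⟨hθ0, hθq⟩ := hθmem
          set v : ℝ := Real.exp (-(lam * θ ε ω / 3)) with hv
          have hv0 : 0 < v := Real.exp_pos _
          have hv1 : v ≤ 1 := Real.exp_le_one_iff.2 (by
            have : 0 ≤ lam * θ ε ω / 3 := by positivity
            linarith)
          have hv3 : v ^ 3 * Real.exp (lam * θ ε ω) = 1 := by
            rw [hv, ← Real.exp_nat_mul, ← Real.exp_add, Real.exp_eq_one_iff]
            push_cast
            ring
          have hv6 : Real.exp (-(2 * lam * θ ε ω)) = v ^ 6 := by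
            rw [hv, ← Real.exp_nat_mul]
            congr 1
            push_cast
            ring
          have htime : (1 - Real.exp (-(2 * lam * θ ε ω))) / (2 * lam) = T * (1 - v ^ 6) := by
            rw [hv6, hTdef]
            ring
          rw [htime] at hθq
          have hY : x₀ + ε * B (T * (1 - v ^ 6)) ω = qp * v ^ 3 := by
            rw [← hθq]
            linear_combination (-(x₀ + ε * B (T * (1 - v ^ 6)) ω)) * hv3
          have hratio := hcross η hη hηlt (x₀ + ε * B T ω) v
            (B (T * (1 - v ^ 6)) ω - (1 - v ^ 6) * B T ω) hNge hNle hv0 hv1 (hbr v ⟨hv0, hv1⟩)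
            (by rw [hηε, ← hY]; ring)
          have hlogs := hlog _ hratio
          have hQe : |Q ε ω| = |Real.log (qp * v ^ 3 / (x₀ + ε * B T ω))| / lam := by
            rw [hQ, htime, hY, ← inv_div (qp * v ^ 3), Real.log_inv, abs_mul, abs_neg,
              abs_of_pos (by positivity : 0 < 1 / lam)]
            ring
          have hlt : |Q ε ω| < δ := by
            rw [hQe, div_lt_iff₀ hlam]
            linarith
          exact absurd hωQ (not_le.2 hlt)
      _ ≤ ENNReal.ofReal (κ / 3) * P (F ε) + ENNReal.ofReal (κ / 3) * P (F ε) +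
            ENNReal.ofReal (κ / 3) * P (F ε) := by
          refine (measure_union_le _ _).trans (add_le_add ((measure_union_le _ _).trans
            (add_le_add ?_ ?_)) ?_)
          · rw [hPpre _ measurableSet_Ioi, hPF]
            exact hCle ε hε0
          · rw [hPpre _ measurableSet_Ioc, hPF]
            exact hcle ε hε0 hε1.le
          · refine (hB.measure_inter_bridge_le hT hM measurableSet_Ioi).trans ?_
            rw [hFpre]
            gcongr
      _ = ENNReal.ofReal κ * P (F ε) := by
          rw [← add_mul, ← add_mul, ← ENNReal.ofReal_add (by positivity) (by positivity),
            ← ENNReal.ofReal_add (by positivity) (by positivity)]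
          congr 2
          ring
  rw [cond_apply hFm]
  refine le_trans ?_ hκlt.le
  calc (P (F ε))⁻¹ * P (F ε ∩ {ω | δ ≤ |Q ε ω|})
      ≤ (P (F ε))⁻¹ * (ENNReal.ofReal κ * P (F ε)) := by gcongr
    _ = ENNReal.ofReal κ * ((P (F ε))⁻¹ * P (F ε)) := by ring
    _ ≤ ENNReal.ofReal κ := mul_le_of_le_one_right' (ENNReal.inv_mul_le_one _)
end
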